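/- arXiv:1401.0500 — 2 statements merged into one kernel-verified Lean document; each statement's English description precedes it below -/
import Mathlib

section
/- There exists a finite matroid M such that: (i) M satisfies the 4th Kinser (Ingleton) inequality for every family of four subsets of its ground set; (ii) M violates the 5th Kinser inequality for some family of five subsets of its ground set; and (iii) the dual matroid M* satisfies the 5th Kinser inequality for every family of five subsets of its ground set. That is, M ∈ K_4 − K_5 while M* ∈ K_5. -/
open Finset

universe u v

namespace Matroid

variable {α : Type*}

/-- The rank of a set in a matroid: the cardinality of a largest independent subset. -/
noncomputable def rnk (M : Matroid α) (X : Set α) : ℕ :=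
  sSup {n : ℕ | ∃ I, M.Indep I ∧ I ⊆ X ∧ I.ncard = n}

/-- The `n`-th Kinser inequality for the family `X 1, …, X n`. -/
def KinserIneq (M : Matroid α) (n : ℕ) (X : ℕ → Set α) : Prop :=
  (∑ i ∈ Finset.Icc 3 n, M.rnk (X i)) + M.rnk (X 1 ∪ X 2) + M.rnk (X 1 ∪ X 3 ∪ X n)
      + ∑ i ∈ Finset.Icc 4 n, M.rnk (X 2 ∪ X (i - 1) ∪ X i)
    ≤ M.rnk (X 1 ∪ X 3) + M.rnk (X 1 ∪ X n)
      + (∑ i ∈ Finset.Icc 3 n, M.rnk (X 2 ∪ X i))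
      + ∑ i ∈ Finset.Icc 4 n, M.rnk (X (i - 1) ∪ X i)

/-- `M` lies in the Kinser class `K n`: the `n`-th Kinser inequality holds for every
family of `n` subsets of the ground set. -/
def MemKinserClass (M : Matroid α) (n : ℕ) : Prop :=
  ∀ X : ℕ → Set α, (∀ i ∈ Finset.Icc 1 n, X i ⊆ M.E) → M.KinserIneq n X

/-- `M` is (isomorphic to) the matroid of linear dependence of a family of vectors of a
vector space over `𝔽`. -/
def IsRepOver {α : Type u} (M : Matroid α) (𝔽 : Type v) [Field 𝔽] : Prop :=
  ∃ (W : Type (max u v)) (_ : AddCommGroup W) (_ : Module 𝔽 W) (φ : α → W),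
    ∀ I : Set α, M.Indep I ↔ I ⊆ M.E ∧ LinearIndependent 𝔽 (fun x : I => φ x.1)

/-- Deletion of a set of elements from a matroid. -/
def del (M : Matroid α) (D : Set α) : Matroid α := M ↾ (M.E \ D)

/-- Contraction of a set of elements in a matroid. -/
def con (M : Matroid α) (C : Set α) : Matroid α := (M✶ ↾ (M✶.E \ C))✶

/-- `N` is a minor of `M`: it is obtained from `M` by contractions and deletions. -/
def IsMinorOf (N M : Matroid α) : Prop :=
  ∃ C D : Set α, C ⊆ M.E ∧ D ⊆ M.E ∧ Disjoint C D ∧ N = (M.con C).del D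

/-- `N` is a proper minor of `M`: at least one element is deleted or contracted. -/
def IsProperMinorOf (N M : Matroid α) : Prop :=
  ∃ C D : Set α, C ⊆ M.E ∧ D ⊆ M.E ∧ Disjoint C D ∧ (C ∪ D).Nonempty ∧
    N = (M.con C).del D

/-- A matroid isomorphism: a bijection of ground sets preserving independence. -/
def IsIsoTo {β : Type*} (M : Matroid α) (N : Matroid β) : Prop :=
  ∃ f : α → β, Set.BijOn f M.E N.E ∧ ∀ I ⊆ M.E, (M.Indep I ↔ N.Indep (f '' I))

/-- The Ingleton inequality (the 4th Kinser inequality) for four subsets. -/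
def IngletonIneq (M : Matroid α) (X₁ X₂ X₃ X₄ : Set α) : Prop :=
  M.rnk X₃ + M.rnk X₄ + M.rnk (X₁ ∪ X₂) + M.rnk (X₁ ∪ X₃ ∪ X₄) + M.rnk (X₂ ∪ X₃ ∪ X₄)
    ≤ M.rnk (X₁ ∪ X₃) + M.rnk (X₁ ∪ X₄) + M.rnk (X₂ ∪ X₃) + M.rnk (X₂ ∪ X₄)
      + M.rnk (X₃ ∪ X₄)

end Matroid

/-!
The witness `Kin(5)⁻` is a sparse paving matroid: its bases are the `r`-sets outside a family `𝓗` of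
`r`-sets, the circuit-hyperplanes, that pairwise share at most `r - 2` elements. In such a matroid
two sets `X`, `Y` with `X ∪ Y ∉ 𝓗` either span or attain equality in the submodular inequality, and
in both cases a Kinser inequality with `r (X ∪ Y)` on its larger side usually follows. A violation of
Ingleton's inequality therefore forces five unions into `𝓗`, and when circuit-hyperplanes sharing
`r - 2` elements are joined by an edge, these five form a wheel with four spokes. Taking complements
preserves adjacency, so if `𝓗` has no such wheel, both the matroid and its dual are Ingleton.

Then the same method shows that the fifth Kinser inequality can fail only for sets `A`, `B`, `C`,
`D`, `E` arranged like the parts `V₁, …, V₅` of a Kinser matroid. If `r ≤ 5`, each of `C`, `D`, `E`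
is an axis: an `(r - 2)`-set contained in three circuit-hyperplanes. The complements of the
circuit-hyperplanes of `Kin(5)⁻` have only two axes, so the dual satisfies the inequality.
-/

namespace Matroid

variable {α : Type*}

section Rank

variable {M : Matroid α} {X Y : Set α}

theorem coe_rnk (M : Matroid α) [M.RankFinite] (X : Set α) : (M.rnk X : ℕ∞) = M.eRk X := by
  obtain ⟨I, hI⟩ := M.exists_isBasis' X
  have hgreatest : IsGreatest {n | ∃ J, M.Indep J ∧ J ⊆ X ∧ J.ncard = n} I.ncard := by
    refine ⟨⟨I, hI.indep, hI.subset, rfl⟩, ?_⟩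
    rintro _ ⟨J, hJ, hJX, rfl⟩
    have := hJ.encard_le_eRk_of_subset hJX
    rwa [← hI.encard_eq_eRk, ← hI.indep.finite.cast_ncard_eq, ← hJ.finite.cast_ncard_eq,
      Nat.cast_le] at this
  rw [rnk, hgreatest.csSup_eq, hI.indep.finite.cast_ncard_eq, hI.encard_eq_eRk]

theorem Indep.rnk_eq_ncard [M.RankFinite] (hX : M.Indep X) : M.rnk X = X.ncard := by
  rw [← Nat.cast_inj (R := ℕ∞), coe_rnk, hX.eRk_eq_encard, hX.finite.cast_ncard_eq]

theorem rnk_le_ncard [M.RankFinite] (hX : X.Finite) : M.rnk X ≤ X.ncard := by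
  rw [← Nat.cast_le (α := ℕ∞), coe_rnk, hX.cast_ncard_eq]
  exact M.eRk_le_encard X

theorem rnk_mono (M : Matroid α) [M.RankFinite] (hXY : X ⊆ Y) : M.rnk X ≤ M.rnk Y := by
  rw [← Nat.cast_le (α := ℕ∞), coe_rnk, coe_rnk]
  exact M.eRk_mono hXY

theorem rnk_le_rnk_ground (M : Matroid α) [M.RankFinite] (X : Set α) : M.rnk X ≤ M.rnk M.E := by
  rw [← Nat.cast_le (α := ℕ∞), coe_rnk, coe_rnk, eRk_ground]
  exact M.eRk_le_eRank X

theorem rnk_union_le_rnk_add_ncard (M : Matroid α) [M.RankFinite] (X : Set α) (hY : Y.Finite) :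
    M.rnk (X ∪ Y) ≤ M.rnk X + Y.ncard := by
  rw [← Nat.cast_le (α := ℕ∞), Nat.cast_add, coe_rnk, coe_rnk, hY.cast_ncard_eq]
  exact M.eRk_union_le_eRk_add_encard X Y

theorem rnk_add_rnk_le (M : Matroid α) [M.RankFinite] (A B C D : Set α)
    (hC : C ⊆ A ∪ B := by clear * -; tauto_set) (hD : D ⊆ A ∩ B := by tauto_set) :
    M.rnk C + M.rnk D ≤ M.rnk A + M.rnk B := by
  have hsubmod : M.rnk (A ∩ B) + M.rnk (A ∪ B) ≤ M.rnk A + M.rnk B := by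
    rw [← Nat.cast_le (α := ℕ∞)]
    push_cast
    simp only [coe_rnk]
    exact M.eRk_inter_add_eRk_union_le A B
  have := M.rnk_mono hC
  have := M.rnk_mono hD
  omega

end Rank

section Inequalities

variable {M : Matroid α} {A B C D E X Y : Set α}

/-- A pair of sets that spans the matroid or attains equality in the submodular inequality. -/
def SpanningOrModular (M : Matroid α) (X Y : Set α) : Prop :=
  M.rnk (X ∪ Y) = M.rnk M.E ∨ M.rnk (X ∪ Y) + M.rnk (X ∩ Y) = M.rnk X + M.rnk Y

theorem IngletonIneq.swap_left (h : M.IngletonIneq A B C D) : M.IngletonIneq B A C D := by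
  unfold IngletonIneq at *
  rw [Set.union_comm B A]
  omega

theorem IngletonIneq.swap_right (h : M.IngletonIneq A B C D) : M.IngletonIneq A B D C := by
  unfold IngletonIneq at *
  rw [Set.union_right_comm A D C, Set.union_right_comm B D C, Set.union_comm D C]
  omega

theorem SpanningOrModular.ingletonIneq_right [M.RankFinite] (h : M.SpanningOrModular C D)
    (A B : Set α) : M.IngletonIneq A B C D := by
  unfold IngletonIneq
  rcases h with hspan | hmod
  · have := M.rnk_add_rnk_le (A ∪ C) (B ∪ C) (A ∪ B ∪ C) C
    have := M.rnk_add_rnk_le (A ∪ D) (B ∪ D) (A ∪ B ∪ D) D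
    have := M.rnk_add_rnk_le (A ∪ B ∪ C) (A ∪ B ∪ D) (C ∪ D) (A ∪ B)
    have := M.rnk_le_rnk_ground (A ∪ C ∪ D)
    have := M.rnk_le_rnk_ground (B ∪ C ∪ D)
    omega
  · have := M.rnk_add_rnk_le (A ∪ C) (A ∪ D) (A ∪ C ∪ D) (A ∪ (C ∩ D))
    have := M.rnk_add_rnk_le (B ∪ C) (B ∪ D) (B ∪ C ∪ D) (B ∪ (C ∩ D))
    have := M.rnk_add_rnk_le (A ∪ (C ∩ D)) (B ∪ (C ∩ D)) (A ∪ B) (C ∩ D)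
    omega

theorem SpanningOrModular.ingletonIneq_left [M.RankFinite] (h : M.SpanningOrModular A C)
    (B D : Set α) : M.IngletonIneq A B C D := by
  unfold IngletonIneq
  rcases h with hspan | hmod
  · have := M.rnk_add_rnk_le (B ∪ C) (C ∪ D) (B ∪ C ∪ D) C
    have := M.rnk_add_rnk_le (A ∪ D) (B ∪ D) (A ∪ B) D
    have := M.rnk_le_rnk_ground (A ∪ C ∪ D)
    omega
  · have := M.rnk_add_rnk_le (A ∪ D) (C ∪ D) (A ∪ C ∪ D) (D ∪ (A ∩ C))
    have := M.rnk_add_rnk_le A (B ∪ (A ∩ C)) (A ∪ B) (A ∩ C)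
    have := M.rnk_add_rnk_le (D ∪ (A ∩ C)) (B ∪ D) (B ∪ D ∪ (A ∩ C)) D
    have := M.rnk_add_rnk_le (B ∪ D ∪ (A ∩ C)) (B ∪ C) (B ∪ C ∪ D) (B ∪ (A ∩ C))
    omega

/-- Ingleton matroids: those satisfying Ingleton's inequality for all quadruples of sets, which need
not lie in the ground set. -/
def IsIngleton (M : Matroid α) : Prop :=
  ∀ A B C D : Set α, M.IngletonIneq A B C D

/-- The fifth Kinser inequality, for `(X₁, …, X₅) = (A, B, C, D, E)`. -/
def KinserFiveIneq (M : Matroid α) (A B C D E : Set α) : Prop :=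
  M.rnk C + M.rnk D + M.rnk E + M.rnk (A ∪ B) + M.rnk (A ∪ C ∪ E) + M.rnk (B ∪ C ∪ D)
      + M.rnk (B ∪ D ∪ E)
    ≤ M.rnk (A ∪ C) + M.rnk (A ∪ E) + M.rnk (B ∪ C) + M.rnk (B ∪ D) + M.rnk (B ∪ E)
      + M.rnk (C ∪ D) + M.rnk (D ∪ E)

theorem kinserIneq_four_iff {X : ℕ → Set α} :
    M.KinserIneq 4 X ↔ M.IngletonIneq (X 1) (X 2) (X 3) (X 4) := by
  simp only [KinserIneq, IngletonIneq, Finset.sum_Icc_succ_top, Nat.reduceLeDiff,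
    Nat.reduceAdd, Nat.reduceSub, Finset.Icc_self, Finset.sum_singleton]
  omega

theorem kinserIneq_five_iff {X : ℕ → Set α} :
    M.KinserIneq 5 X ↔ M.KinserFiveIneq (X 1) (X 2) (X 3) (X 4) (X 5) := by
  simp only [KinserIneq, KinserFiveIneq, Finset.sum_Icc_succ_top, Nat.reduceLeDiff,
    Nat.reduceAdd, Nat.reduceSub, Finset.Icc_self, Finset.sum_singleton]
  omega

theorem KinserFiveIneq.swap (h : M.KinserFiveIneq A B C D E) : M.KinserFiveIneq A B E D C := by
  unfold KinserFiveIneq at *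
  rw [Set.union_right_comm A E C, Set.union_right_comm B E D, Set.union_right_comm B D C,
    Set.union_comm E D, Set.union_comm D C]
  omega

theorem SpanningOrModular.kinserFiveIneq_of_two_three [M.RankFinite] (hM : M.IsIngleton)
    (h : M.SpanningOrModular B C) (A D E : Set α) : M.KinserFiveIneq A B C D E := by
  unfold KinserFiveIneq
  rcases h with hspan | hmod
  · have : M.IngletonIneq A B D E := hM A B D E
    unfold IngletonIneq at this
    have := M.rnk_add_rnk_le (A ∪ C) (C ∪ D) (A ∪ C ∪ D) C
    have := M.rnk_add_rnk_le (A ∪ C ∪ D) (A ∪ D ∪ E) (A ∪ C ∪ E) (A ∪ D)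
    have := M.rnk_le_rnk_ground (B ∪ C ∪ D)
    omega
  · have := M.rnk_add_rnk_le (A ∪ (B ∩ C)) B (A ∪ B) (B ∩ C)
    have := M.rnk_add_rnk_le (B ∪ D) (C ∪ D) (B ∪ C ∪ D) (D ∪ (B ∩ C))
    have := M.rnk_add_rnk_le (A ∪ C) (A ∪ (B ∩ C) ∪ E) (A ∪ C ∪ E) (A ∪ (B ∩ C))
    have := M.rnk_add_rnk_le (B ∪ E) (D ∪ (B ∩ C) ∪ E) (B ∪ D ∪ E) ((B ∩ C) ∪ E)
    have := M.rnk_add_rnk_le (D ∪ E) (D ∪ (B ∩ C)) (D ∪ (B ∩ C) ∪ E) D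
    have := M.rnk_add_rnk_le (A ∪ E) ((B ∩ C) ∪ E) (A ∪ (B ∩ C) ∪ E) E
    omega

theorem SpanningOrModular.kinserFiveIneq_of_two_four [M.RankFinite] (hM : M.IsIngleton)
    (h : M.SpanningOrModular B D) (A C E : Set α) : M.KinserFiveIneq A B C D E := by
  unfold KinserFiveIneq
  rcases h with hspan | hmod
  · have : M.IngletonIneq A B C E := hM A B C E
    unfold IngletonIneq at this
    have := M.rnk_add_rnk_le (C ∪ D) (D ∪ E) (C ∪ D ∪ E) D
    have := M.rnk_le_rnk_ground (B ∪ D ∪ E)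
    have := M.rnk_le_rnk_ground (B ∪ C ∪ D)
    have := M.rnk_add_rnk_le (B ∪ C ∪ E) (C ∪ D ∪ E) (B ∪ D) (C ∪ E)
    omega
  · have : M.IngletonIneq A (B ∩ D) C E := hM A (B ∩ D) C E
    unfold IngletonIneq at this
    have := M.rnk_add_rnk_le (A ∪ (B ∩ D)) B (A ∪ B) (B ∩ D)
    have := M.rnk_add_rnk_le (B ∪ C) (C ∪ D) (B ∪ C ∪ D) ((B ∩ D) ∪ C)
    have := M.rnk_add_rnk_le (B ∪ E) (D ∪ E) (B ∪ D ∪ E) ((B ∩ D) ∪ E)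
    have := M.rnk_mono (show C ∪ E ⊆ B ∩ D ∪ C ∪ E by tauto_set)
    omega

theorem SpanningOrModular.kinserFiveIneq_of_three_four [M.RankFinite] (hM : M.IsIngleton)
    (h : M.SpanningOrModular C D) (A B E : Set α) : M.KinserFiveIneq A B C D E := by
  unfold KinserFiveIneq
  rcases h with hspan | hmod
  · have : M.IngletonIneq A B C E := hM A B C E
    unfold IngletonIneq at this
    have := M.rnk_add_rnk_le (B ∪ D) (D ∪ E) (B ∪ D ∪ E) D
    have := M.rnk_mono (show C ∪ E ⊆ B ∪ C ∪ E by tauto_set)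
    have := M.rnk_le_rnk_ground (B ∪ C ∪ D)
    omega
  · have : M.IngletonIneq A B E (C ∩ D) := hM A B E (C ∩ D)
    unfold IngletonIneq at this
    have := M.rnk_add_rnk_le (A ∪ C) (A ∪ E ∪ (C ∩ D)) (A ∪ C ∪ E) (A ∪ (C ∩ D))
    have := M.rnk_add_rnk_le (D ∪ E) (B ∪ E ∪ (C ∩ D)) (B ∪ D ∪ E) (E ∪ (C ∩ D))
    have := M.rnk_add_rnk_le (B ∪ C) (B ∪ D) (B ∪ C ∪ D) (B ∪ (C ∩ D))
    omega

end Inequalities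

theorem exists_indep_ncard_eq_rnk (M : Matroid α) [M.RankFinite] (X : Set α) :
    ∃ I ⊆ X, M.Indep I ∧ I.ncard = M.rnk X := by
  obtain ⟨I, hI⟩ := M.exists_isBasis' X
  refine ⟨I, hI.subset, hI.indep, ?_⟩
  rw [← Nat.cast_inj (R := ℕ∞), coe_rnk, hI.indep.finite.cast_ncard_eq, hI.encard_eq_eRk]

theorem isBase_iff_ncard_eq_rnk {M : Matroid α} [M.RankFinite] {B : Set α} :
    M.IsBase B ↔ M.Indep B ∧ B.ncard = M.rnk M.E := by
  rw [← Nat.cast_inj (R := ℕ∞), coe_rnk, eRk_ground]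
  refine ⟨fun hB ↦ ⟨hB.indep, by rw [hB.finite.cast_ncard_eq, hB.encard_eq_eRank]⟩, ?_⟩
  rintro ⟨hB, hcard⟩
  refine hB.isBase_of_eRk_ge hB.finite ?_
  rw [← hcard, hB.finite.cast_ncard_eq, hB.eRk_eq_encard]

theorem ncard_compl_inter_compl_add [Finite α] (X Y : Set α) :
    (Xᶜ ∩ Yᶜ).ncard + X.ncard + Y.ncard = Nat.card α + (X ∩ Y).ncard := by
  have := Set.ncard_add_ncard_compl (X ∪ Y)
  have := Set.ncard_union_add_ncard_inter X Y
  rw [← Set.compl_union]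
  omega

section SparsePaving

variable {r s : ℕ} {𝓗 : Set (Set α)} {H K X Y : Set α}

/-- A family of sets that can serve as the set of circuit-hyperplanes of a sparse paving matroid of
rank `r`: all members have size `r`, and two distinct members share at most `r - 2` elements. The
rank is taken to be positive so that the empty set is not a member. -/
structure IsSparsePavingFamily (r : ℕ) (𝓗 : Set (Set α)) : Prop where
  pos : 0 < r
  ncard_eq : ∀ H ∈ 𝓗, H.ncard = r
  ncard_inter_add_two_le : 𝓗.Pairwise fun H K ↦ (H ∩ K).ncard + 2 ≤ r

namespace IsSparsePavingFamily

theorem notMem_of_ncard_lt (h : IsSparsePavingFamily r 𝓗) (hX : X.ncard < r) : X ∉ 𝓗 :=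
  fun hmem ↦ hX.ne (h.ncard_eq X hmem)

theorem notMem_of_lt_ncard (h : IsSparsePavingFamily r 𝓗) (hX : r < X.ncard) : X ∉ 𝓗 :=
  fun hmem ↦ hX.ne' (h.ncard_eq X hmem)

variable [Finite α]

theorem ncard_add_two_le (h : IsSparsePavingFamily r 𝓗) (hH : H ∈ 𝓗) (hK : K ∈ 𝓗) (hHK : H ≠ K)
    (hXH : X ⊆ H) (hXK : X ⊆ K) : X.ncard + 2 ≤ r :=
  (Nat.add_le_add_right (Set.ncard_le_ncard (Set.subset_inter hXH hXK)) 2).trans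
    (h.ncard_inter_add_two_le hH hK hHK)

theorem exists_insert_notMem (h : IsSparsePavingFamily r 𝓗) (hXY : X.ncard < Y.ncard)
    (hY : Y ∉ 𝓗) : ∃ y ∈ Y, y ∉ X ∧ insert y X ∉ 𝓗 := by
  by_contra! hall
  obtain ⟨y, hyY, hyX⟩ := Set.sdiff_nonempty_of_ncard_lt_ncard hXY
  have hy := hall y hyY hyX
  have hcard : X.ncard + 1 = r := by rw [← h.ncard_eq _ hy, Set.ncard_insert_of_notMem hyX]
  have hYsub : Y ⊆ insert y X := by
    intro z hzY
    by_contra hz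
    have hzX : z ∉ X := fun hzX ↦ hz (Set.mem_insert_of_mem y hzX)
    have hne : insert y X ≠ insert z X := fun heq ↦ hz (heq ▸ Set.mem_insert z X)
    have := h.ncard_add_two_le hy (hall z hzY hzX) hne (Set.subset_insert y X)
      (Set.subset_insert z X)
    omega
  have hYle : (insert y X).ncard ≤ Y.ncard := by rw [h.ncard_eq _ hy]; omega
  exact hY (Set.eq_of_subset_of_ncard_le hYsub hYle ▸ hy)

/-- The sparse paving matroid of rank `r` on the whole type with circuit-hyperplanes `𝓗`. -/
protected noncomputable def matroid (h : IsSparsePavingFamily r 𝓗) : Matroid α :=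
  (IndepMatroid.ofFinite (E := Set.univ) Set.finite_univ (fun I ↦ I.ncard ≤ r ∧ I ∉ 𝓗)
    ⟨by simp, h.notMem_of_ncard_lt (by simpa using h.pos)⟩
    (fun I J hJ hIJ ↦ ⟨(Set.ncard_le_ncard hIJ).trans hJ.1, fun hI ↦ hJ.2
      (Set.eq_of_subset_of_ncard_le hIJ (hJ.1.trans (h.ncard_eq I hI).ge) ▸ hI)⟩)
    (fun I J _ hJ hIJ ↦ by
      obtain ⟨y, hyJ, hyI, hy⟩ := h.exists_insert_notMem hIJ hJ.2
      refine ⟨y, hyJ, hyI, ?_, hy⟩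
      rw [Set.ncard_insert_of_notMem hyI]
      exact hIJ.trans_le hJ.1)
    (fun I _ ↦ I.subset_univ)).matroid

theorem matroid_ground (h : IsSparsePavingFamily r 𝓗) : h.matroid.E = Set.univ := rfl

theorem matroid_indep_iff (h : IsSparsePavingFamily r 𝓗) :
    h.matroid.Indep X ↔ X.ncard ≤ r ∧ X ∉ 𝓗 := by
  simp [IsSparsePavingFamily.matroid]

theorem rnk_le (h : IsSparsePavingFamily r 𝓗) (X : Set α) : h.matroid.rnk X ≤ r := by
  obtain ⟨I, -, hI, hcard⟩ := h.matroid.exists_indep_ncard_eq_rnk X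
  exact hcard ▸ (h.matroid_indep_iff.1 hI).1

theorem rnk_eq_min (h : IsSparsePavingFamily r 𝓗) (hX : X ∉ 𝓗) :
    h.matroid.rnk X = min X.ncard r := by
  refine le_antisymm (le_min (rnk_le_ncard X.toFinite) (h.rnk_le X)) ?_
  by_contra! hlt
  obtain ⟨I, hIX, hI, hcard⟩ := h.matroid.exists_indep_ncard_eq_rnk X
  rw [← hcard, lt_min_iff] at hlt
  obtain ⟨y, hyX, hyI, hy⟩ := h.exists_insert_notMem hlt.1 hX
  have hinsert : (insert y I).ncard = I.ncard + 1 := Set.ncard_insert_of_notMem hyI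
  have hindep : h.matroid.Indep (insert y I) :=
    h.matroid_indep_iff.2 ⟨by rw [hinsert]; exact hlt.2, hy⟩
  have := h.matroid.rnk_mono (Set.insert_subset hyX hIX)
  rw [hindep.rnk_eq_ncard] at this
  omega

theorem rnk_lt_of_mem (h : IsSparsePavingFamily r 𝓗) (hH : H ∈ 𝓗) : h.matroid.rnk H < r := by
  obtain ⟨I, hIH, hI, hcard⟩ := h.matroid.exists_indep_ncard_eq_rnk H
  refine hcard ▸ (h.matroid_indep_iff.1 hI).1.lt_of_ne fun hIr ↦ (h.matroid_indep_iff.1 hI).2 ?_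
  rwa [Set.eq_of_subset_of_ncard_le hIH (by rw [hIr, h.ncard_eq H hH])]

theorem rnk_add_one_of_mem (h : IsSparsePavingFamily r 𝓗) (hH : H ∈ 𝓗) :
    h.matroid.rnk H + 1 = r := by
  refine le_antisymm (h.rnk_lt_of_mem hH) ?_
  obtain ⟨I, hIH, hI⟩ := Set.exists_subset_card_eq (s := H) (n := r - 1) (by
    rw [h.ncard_eq H hH]; omega)
  have hrnk := h.rnk_eq_min (h.notMem_of_ncard_lt (X := I) (by have := h.pos; omega))
  have := h.matroid.rnk_mono hIH
  omega

theorem eq_of_mem_of_subset_of_rnk_lt (h : IsSparsePavingFamily r 𝓗) (hH : H ∈ 𝓗) (hHX : H ⊆ X)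
    (hX : h.matroid.rnk X < r) : X = H := by
  have hcard := Set.ncard_le_ncard hHX
  rw [h.ncard_eq H hH] at hcard
  by_cases hmem : X ∈ 𝓗
  · refine (Set.eq_of_subset_of_ncard_le hHX ?_).symm
    rw [h.ncard_eq X hmem, h.ncard_eq H hH]
  · have := h.rnk_eq_min hmem
    omega

theorem spanningOrModular (h : IsSparsePavingFamily r 𝓗) (hXY : X ∪ Y ∉ 𝓗) :
    h.matroid.SpanningOrModular X Y := by
  rcases le_or_gt (X ∪ Y).ncard r with hle | hlt
  · have hindep : h.matroid.Indep (X ∪ Y) := h.matroid_indep_iff.2 ⟨hle, hXY⟩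
    right
    rw [hindep.rnk_eq_ncard, (hindep.subset Set.subset_union_left).rnk_eq_ncard,
      (hindep.subset Set.subset_union_right).rnk_eq_ncard,
      (hindep.subset (Set.inter_subset_left.trans Set.subset_union_left)).rnk_eq_ncard,
      Set.ncard_union_add_ncard_inter]
  · left
    have := h.rnk_eq_min hXY
    have := h.matroid.rnk_le_rnk_ground (X ∪ Y)
    have := h.rnk_le h.matroid.E
    omega

theorem mem_of_not_spanningOrModular (h : IsSparsePavingFamily r 𝓗)
    (hXY : ¬ h.matroid.SpanningOrModular X Y) : X ∪ Y ∈ 𝓗 :=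
  not_imp_comm.1 h.spanningOrModular hXY

theorem matroid_isBase_iff (h : IsSparsePavingFamily r 𝓗) (hr : r < Nat.card α) :
    h.matroid.IsBase X ↔ X.ncard = r ∧ X ∉ 𝓗 := by
  have huniv : (Set.univ : Set α).ncard = Nat.card α := Set.ncard_univ α
  have hrnk := h.rnk_eq_min (h.notMem_of_lt_ncard (huniv ▸ hr))
  rw [huniv, min_eq_right hr.le] at hrnk
  rw [isBase_iff_ncard_eq_rnk, h.matroid_indep_iff, h.matroid_ground, hrnk]
  exact ⟨fun hX ↦ ⟨hX.2, hX.1.2⟩, fun hX ↦ ⟨⟨hX.1.le, hX.2⟩, hX.1⟩⟩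

theorem image_compl (h : IsSparsePavingFamily r 𝓗) (hs : 0 < s) (hcard : r + s = Nat.card α) :
    IsSparsePavingFamily s (compl '' 𝓗) where
  pos := hs
  ncard_eq := by
    rintro _ ⟨H, hH, rfl⟩
    have := Set.ncard_add_ncard_compl H
    rw [h.ncard_eq H hH] at this
    omega
  ncard_inter_add_two_le := by
    rintro _ ⟨H, hH, rfl⟩ _ ⟨K, hK, rfl⟩ hne
    have := ncard_compl_inter_compl_add H K
    rw [h.ncard_eq H hH, h.ncard_eq K hK] at this
    have := h.ncard_inter_add_two_le hH hK (mt (congrArg compl) hne)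
    omega

theorem dual_matroid (h : IsSparsePavingFamily r 𝓗) (hs : 0 < s) (hcard : r + s = Nat.card α) :
    h.matroid✶ = (h.image_compl hs hcard).matroid := by
  refine ext_isBase rfl fun B _ ↦ ?_
  have := Set.ncard_add_ncard_compl B
  have := h.pos
  rw [dual_isBase_iff, h.matroid_ground, ← Set.compl_eq_univ_sdiff,
    h.matroid_isBase_iff (by omega), matroid_isBase_iff _ (by omega), Set.mem_compl_image]
  refine and_congr_left fun _ ↦ ?_
  omega

theorem ne_of_rnk_union (h : IsSparsePavingFamily r 𝓗) (hH : H ∈ 𝓗) (hX : r ≤ h.matroid.rnk X)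
    (hXHK : X ⊆ H ∪ K := by clear * -; tauto_set) : H ≠ K := by
  rintro rfl
  rw [Set.union_self] at hXHK
  exact ((h.matroid.rnk_mono hXHK).trans_lt (h.rnk_lt_of_mem hH)).not_ge hX

end IsSparsePavingFamily

/-- Adjacency in the graph of circuit-hyperplanes of a sparse paving matroid of rank `r`: distinct
sets that share at least `r - 2` elements. -/
def Adjacent (r : ℕ) (H K : Set α) : Prop :=
  H ≠ K ∧ r ≤ (H ∩ K).ncard + 2

/-- A family of sets in whose adjacency graph there is no wheel with four spokes, that is, no
4-cycle `K₁K₂K₃K₄` all of whose vertices are adjacent to a further vertex `H`, the hub. -/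
def IsWheelFree (r : ℕ) (𝓗 : Set (Set α)) : Prop :=
  ∀ H ∈ 𝓗, ∀ K₁ ∈ 𝓗, ∀ K₂ ∈ 𝓗, ∀ K₃ ∈ 𝓗, ∀ K₄ ∈ 𝓗,
    Adjacent r H K₁ → Adjacent r H K₂ → Adjacent r H K₃ → Adjacent r H K₄ →
    Adjacent r K₁ K₂ → Adjacent r K₂ K₃ → Adjacent r K₃ K₄ → Adjacent r K₄ K₁ →
    K₁ = K₃ ∨ K₂ = K₄

theorem adjacent_of_subset [Finite α] (hHK : H ≠ K) (hX : r ≤ X.ncard + 2)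
    (hXH : X ⊆ H := by clear * -; tauto_set) (hXK : X ⊆ K := by tauto_set) : Adjacent r H K :=
  ⟨hHK, hX.trans (Nat.add_le_add_right (Set.ncard_le_ncard (Set.subset_inter hXH hXK)) 2)⟩

theorem IsWheelFree.image_compl [Finite α] (hw : IsWheelFree r 𝓗)
    (h : IsSparsePavingFamily r 𝓗) (hcard : r + s = Nat.card α) :
    IsWheelFree s (compl '' 𝓗) := by
  have adjacent_of_compl : ∀ H ∈ 𝓗, ∀ K ∈ 𝓗, Adjacent s Hᶜ Kᶜ → Adjacent r H K := by
    intro H hH K hK hHK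
    refine ⟨mt (congrArg compl) hHK.1, ?_⟩
    have := ncard_compl_inter_compl_add H K
    rw [h.ncard_eq H hH, h.ncard_eq K hK] at this
    have := hHK.2
    omega
  rintro _ ⟨H, hH, rfl⟩ _ ⟨K₁, h₁, rfl⟩ _ ⟨K₂, h₂, rfl⟩ _ ⟨K₃, h₃, rfl⟩ _ ⟨K₄, h₄, rfl⟩
    a₁ a₂ a₃ a₄ a₁₂ a₂₃ a₃₄ a₄₁
  simp only [compl_inj_iff]
  exact hw H hH K₁ h₁ K₂ h₂ K₃ h₃ K₄ h₄ (adjacent_of_compl _ hH _ h₁ a₁)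
    (adjacent_of_compl _ hH _ h₂ a₂) (adjacent_of_compl _ hH _ h₃ a₃)
    (adjacent_of_compl _ hH _ h₄ a₄) (adjacent_of_compl _ h₁ _ h₂ a₁₂)
    (adjacent_of_compl _ h₂ _ h₃ a₂₃) (adjacent_of_compl _ h₃ _ h₄ a₃₄)
    (adjacent_of_compl _ h₄ _ h₁ a₄₁)

theorem ncard_union_add_ncard_le [Finite α] (X Y Z : Set α) :
    (X ∪ Y).ncard + Z.ncard ≤ (X ∪ (Y ∩ Z)).ncard + (Y ∪ Z).ncard := by
  have := Set.ncard_union_le (X ∪ (Y ∩ Z)) (Y \ Z)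
  rw [show X ∪ Y ∩ Z ∪ Y \ Z = X ∪ Y by tauto_set] at this
  have := Set.ncard_sdiff_add_ncard Y Z
  omega

namespace IsSparsePavingFamily

variable [Finite α] {A B C D E : Set α}

theorem union_mem_of_not_ingletonIneq (h : IsSparsePavingFamily r 𝓗)
    (hABCD : ¬ h.matroid.IngletonIneq A B C D) :
    A ∪ C ∈ 𝓗 ∧ A ∪ D ∈ 𝓗 ∧ B ∪ C ∈ 𝓗 ∧ B ∪ D ∈ 𝓗 ∧ C ∪ D ∈ 𝓗 := by
  refine ⟨h.mem_of_not_spanningOrModular (mt (fun hm ↦ ?_) hABCD),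
    h.mem_of_not_spanningOrModular (mt (fun hm ↦ ?_) hABCD),
    h.mem_of_not_spanningOrModular (mt (fun hm ↦ ?_) hABCD),
    h.mem_of_not_spanningOrModular (mt (fun hm ↦ ?_) hABCD),
    h.mem_of_not_spanningOrModular (mt (fun hm ↦ ?_) hABCD)⟩
  · exact hm.ingletonIneq_left B D
  · exact (hm.ingletonIneq_left B C).swap_right
  · exact (hm.ingletonIneq_left A D).swap_left
  · exact (hm.ingletonIneq_left A C).swap_left.swap_right
  · exact hm.ingletonIneq_right A B

theorem ncard_add_two_le_of_not_ingletonIneq (h : IsSparsePavingFamily r 𝓗)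
    (hABCD : ¬ h.matroid.IngletonIneq A B C D) : C.ncard + 2 ≤ r := by
  obtain ⟨hAC, hAD, hBC, hBD, hCD⟩ := h.union_mem_of_not_ingletonIneq hABCD
  by_contra hC
  have hAC_CD : A ∪ C = C ∪ D := by
    by_contra hne
    exact hC (h.ncard_add_two_le hAC hCD hne (by tauto_set) (by tauto_set))
  have hBC_CD : B ∪ C = C ∪ D := by
    by_contra hne
    exact hC (h.ncard_add_two_le hBC hCD hne (by tauto_set) (by tauto_set))
  have := h.matroid.rnk_mono (show A ∪ B ⊆ C ∪ D by clear * - hAC_CD hBC_CD; tauto_set)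
  have := h.matroid.rnk_mono (show A ∪ C ∪ D ⊆ C ∪ D by clear * - hAC_CD; tauto_set)
  have := h.matroid.rnk_mono (show B ∪ C ∪ D ⊆ C ∪ D by clear * - hBC_CD; tauto_set)
  have := h.matroid.rnk_mono (show C ⊆ C ∪ D by tauto_set)
  have := h.matroid.rnk_mono (show D ⊆ C ∪ D by tauto_set)
  have := h.rnk_add_one_of_mem hAC
  have := h.rnk_add_one_of_mem hAD
  have := h.rnk_add_one_of_mem hBC
  have := h.rnk_add_one_of_mem hBD
  have := h.rnk_add_one_of_mem hCD
  unfold IngletonIneq at hABCD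
  omega

theorem le_rnk_of_not_ingletonIneq (h : IsSparsePavingFamily r 𝓗)
    (hABCD : ¬ h.matroid.IngletonIneq A B C D) :
    r ≤ C.ncard + 2 ∧ r ≤ D.ncard + 2 ∧ r ≤ h.matroid.rnk (A ∪ B) ∧
      r ≤ h.matroid.rnk (A ∪ C ∪ D) ∧ r ≤ h.matroid.rnk (B ∪ C ∪ D) := by
  obtain ⟨hAC, hAD, hBC, hBD, hCD⟩ := h.union_mem_of_not_ingletonIneq hABCD
  have := h.ncard_add_two_le_of_not_ingletonIneq hABCD
  have := h.ncard_add_two_le_of_not_ingletonIneq (mt IngletonIneq.swap_right hABCD)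
  have := h.rnk_add_one_of_mem hAC
  have := h.rnk_add_one_of_mem hAD
  have := h.rnk_add_one_of_mem hBC
  have := h.rnk_add_one_of_mem hBD
  have := h.rnk_add_one_of_mem hCD
  have := h.rnk_le (A ∪ B)
  have := h.rnk_le (A ∪ C ∪ D)
  have := h.rnk_le (B ∪ C ∪ D)
  have := rnk_le_ncard (M := h.matroid) C.toFinite
  have := rnk_le_ncard (M := h.matroid) D.toFinite
  unfold IngletonIneq at hABCD
  omega

theorem isIngleton (h : IsSparsePavingFamily r 𝓗) (hw : IsWheelFree r 𝓗) :
    h.matroid.IsIngleton := by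
  intro A B C D
  by_contra hABCD
  obtain ⟨hAC, hAD, hBC, hBD, hCD⟩ := h.union_mem_of_not_ingletonIneq hABCD
  obtain ⟨hC, hD, hAB, hACD, hBCD⟩ := h.le_rnk_of_not_ingletonIneq hABCD
  have hinter : ∀ X, X ∪ C ∈ 𝓗 → r ≤ (X ∪ (C ∩ D)).ncard + 2 := by
    intro X hX
    have := ncard_union_add_ncard_le X C D
    have := h.ncard_eq _ hX
    have := h.ncard_eq _ hCD
    omega
  -- The hub of the wheel is `C ∪ D`, its rim the cycle `A ∪ C`, `A ∪ D`, `B ∪ D`, `B ∪ C`.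
  obtain heq | heq := hw _ hCD _ hAC _ hAD _ hBD _ hBC
    (adjacent_of_subset (h.ne_of_rnk_union hCD hACD) hC)
    (adjacent_of_subset (h.ne_of_rnk_union hCD hACD) hD)
    (adjacent_of_subset (h.ne_of_rnk_union hCD hBCD) hD)
    (adjacent_of_subset (h.ne_of_rnk_union hCD hBCD) hC)
    (adjacent_of_subset (h.ne_of_rnk_union hAC hACD) (hinter A hAC))
    (adjacent_of_subset (h.ne_of_rnk_union hAD hAB) hD)
    (adjacent_of_subset (h.ne_of_rnk_union hBD hBCD) (hinter B hBC))
    (adjacent_of_subset (h.ne_of_rnk_union hBC hAB) hC)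
  · exact h.ne_of_rnk_union hAC hAB (by clear * -; tauto_set) heq
  · exact h.ne_of_rnk_union hAD hAB (by clear * -; tauto_set) heq

theorem inter_eq_of_subset (h : IsSparsePavingFamily r 𝓗) (hH : H ∈ 𝓗) (hK : K ∈ 𝓗)
    (hHK : H ≠ K) (hX : r ≤ X.ncard + 2) (hXH : X ⊆ H := by clear * -; tauto_set)
    (hXK : X ⊆ K := by clear * -; tauto_set) : H ∩ K = X :=
  (Set.eq_of_subset_of_ncard_le (Set.subset_inter hXH hXK) (by
    have := h.ncard_inter_add_two_le hH hK hHK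
    omega)).symm

theorem lt_ncard_of_mem_of_subset (h : IsSparsePavingFamily r 𝓗) (hH : H ∈ 𝓗)
    (hX : r ≤ h.matroid.rnk X) (hHX : H ⊆ X := by clear * -; tauto_set) : r < X.ncard := by
  refine (hX.trans (rnk_le_ncard X.toFinite)).lt_of_ne fun hcard ↦ ?_
  rw [← Set.eq_of_subset_of_ncard_le hHX (by rw [← hcard, h.ncard_eq H hH])] at hX
  exact (h.rnk_lt_of_mem hH).not_ge hX

/-- The part of a Kinser configuration `(A, B, C, D, E)` that does not involve `A`. -/
structure IsKinserFrame (h : IsSparsePavingFamily r 𝓗) (B C D E : Set α) : Prop where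
  mem_BC : B ∪ C ∈ 𝓗
  mem_BD : B ∪ D ∈ 𝓗
  mem_BE : B ∪ E ∈ 𝓗
  mem_CD : C ∪ D ∈ 𝓗
  mem_DE : D ∪ E ∈ 𝓗
  ncard_D : D.ncard + 2 = r
  rnk_BCD : r ≤ h.matroid.rnk (B ∪ C ∪ D)
  rnk_BDE : r ≤ h.matroid.rnk (B ∪ D ∪ E)
  rnk_CE : r ≤ h.matroid.rnk (C ∪ E)

theorem union_mem_of_not_kinserFiveIneq (h : IsSparsePavingFamily r 𝓗)
    (hI : h.matroid.IsIngleton) (hv : ¬ h.matroid.KinserFiveIneq A B C D E) :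
    B ∪ C ∈ 𝓗 ∧ B ∪ D ∈ 𝓗 ∧ B ∪ E ∈ 𝓗 ∧ C ∪ D ∈ 𝓗 ∧ D ∪ E ∈ 𝓗 := by
  rw [Set.union_comm D E]
  refine ⟨h.mem_of_not_spanningOrModular (mt (fun hm ↦ ?_) hv),
    h.mem_of_not_spanningOrModular (mt (fun hm ↦ ?_) hv),
    h.mem_of_not_spanningOrModular (mt (fun hm ↦ ?_) hv),
    h.mem_of_not_spanningOrModular (mt (fun hm ↦ ?_) hv),
    h.mem_of_not_spanningOrModular (mt (fun hm ↦ ?_) hv)⟩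
  · exact hm.kinserFiveIneq_of_two_three hI A D E
  · exact hm.kinserFiveIneq_of_two_four hI A C E
  · exact (hm.kinserFiveIneq_of_two_three hI A D C).swap
  · exact hm.kinserFiveIneq_of_three_four hI A B E
  · exact (hm.kinserFiveIneq_of_three_four hI A B C).swap

theorem rnk_of_not_kinserFiveIneq (h : IsSparsePavingFamily r 𝓗)
    (hI : h.matroid.IsIngleton) (hv : ¬ h.matroid.KinserFiveIneq A B C D E) :
    D.ncard + 2 = r ∧ r ≤ h.matroid.rnk (B ∪ C ∪ D) ∧ r ≤ h.matroid.rnk (B ∪ D ∪ E) ∧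
      h.matroid.rnk (B ∪ C ∪ E) ≤ h.matroid.rnk (C ∪ E) := by
  obtain ⟨hBC, hBD, hBE, hCD, hDE⟩ := h.union_mem_of_not_kinserFiveIneq hI hv
  have := h.rnk_add_one_of_mem hBC
  have := h.rnk_add_one_of_mem hBD
  have := h.rnk_add_one_of_mem hBE
  have := h.rnk_add_one_of_mem hCD
  have := h.rnk_add_one_of_mem hDE
  have hsum : 3 * r + h.matroid.rnk (B ∪ C ∪ E) ≤ h.matroid.rnk D + h.matroid.rnk (B ∪ C ∪ D)
      + h.matroid.rnk (B ∪ D ∪ E) + h.matroid.rnk (C ∪ E) + 2 := by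
    have : h.matroid.IngletonIneq A B C E := hI A B C E
    unfold IngletonIneq at this
    unfold KinserFiveIneq at hv
    omega
  have hmono := h.matroid.rnk_mono (show C ∪ E ⊆ B ∪ C ∪ E by tauto_set)
  have hD : D.ncard + 2 ≤ r := by
    by_contra hD
    have hBD_CD : B ∪ D = C ∪ D := by
      by_contra hne
      exact hD (h.ncard_add_two_le hBD hCD hne (by tauto_set) (by tauto_set))
    have hBD_DE : B ∪ D = D ∪ E := by
      by_contra hne
      exact hD (h.ncard_add_two_le hBD hDE hne (by tauto_set) (by tauto_set))
    have := h.matroid.rnk_mono (show D ⊆ B ∪ D by tauto_set)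
    have := h.matroid.rnk_mono (show B ∪ C ∪ D ⊆ B ∪ D by clear * - hBD_CD; tauto_set)
    have := h.matroid.rnk_mono (show B ∪ D ∪ E ⊆ B ∪ D by clear * - hBD_DE; tauto_set)
    omega
  have := rnk_le_ncard (M := h.matroid) D.toFinite
  have := h.rnk_le (B ∪ C ∪ D)
  have := h.rnk_le (B ∪ D ∪ E)
  omega

theorem isKinserFrame_of_not_kinserFiveIneq (h : IsSparsePavingFamily r 𝓗)
    (hI : h.matroid.IsIngleton) (hv : ¬ h.matroid.KinserFiveIneq A B C D E) :
    h.IsKinserFrame B C D E := by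
  obtain ⟨hBC, hBD, hBE, hCD, hDE⟩ := h.union_mem_of_not_kinserFiveIneq hI hv
  obtain ⟨hD, hBCD, hBDE, hBCE⟩ := h.rnk_of_not_kinserFiveIneq hI hv
  refine ⟨hBC, hBD, hBE, hCD, hDE, hD, hBCD, hBDE, ?_⟩
  by_contra! hCE
  have hBCE_eq : B ∪ C ∪ E = B ∪ C :=
    h.eq_of_mem_of_subset_of_rnk_lt hBC (by tauto_set) (hBCE.trans_lt hCE)
  by_cases hCD_DE : C ∪ D = D ∪ E
  · have := h.ncard_add_two_le (X := C ∪ E) hBC hCD (h.ne_of_rnk_union hBC hBCD)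
      (by clear * - hBCE_eq; tauto_set) (by clear * - hCD_DE; tauto_set)
    have := rnk_le_ncard (M := h.matroid) (C ∪ E).toFinite
    have := h.rnk_add_one_of_mem hBC
    rw [hBCE_eq] at hBCE
    omega
  · have hBD_DE : (B ∪ D) ∩ (D ∪ E) = D :=
      h.inter_eq_of_subset hBD hDE (h.ne_of_rnk_union hBD hBDE) hD.ge
    have hCD_DE' : (C ∪ D) ∩ (D ∪ E) = D := h.inter_eq_of_subset hCD hDE hCD_DE hD.ge
    have hED : E ⊆ D := by
      intro e he
      rcases hBCE_eq.subset (Or.inr he) with heB | heC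
      · exact hBD_DE.subset ⟨Or.inl heB, Or.inr he⟩
      · exact hCD_DE'.subset ⟨Or.inl heC, Or.inr he⟩
    have := h.ncard_eq _ hDE
    rw [Set.union_eq_left.2 hED] at this
    omega

namespace IsKinserFrame

variable {h : IsSparsePavingFamily r 𝓗}

theorem symm (hF : h.IsKinserFrame B C D E) : h.IsKinserFrame B E D C where
  mem_BC := hF.mem_BE
  mem_BD := hF.mem_BD
  mem_BE := hF.mem_BC
  mem_CD := Set.union_comm D E ▸ hF.mem_DE
  mem_DE := Set.union_comm C D ▸ hF.mem_CD
  ncard_D := hF.ncard_D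
  rnk_BCD := Set.union_right_comm B D E ▸ hF.rnk_BDE
  rnk_BDE := Set.union_right_comm B C D ▸ hF.rnk_BCD
  rnk_CE := Set.union_comm C E ▸ hF.rnk_CE

theorem ncard_C_add_two_le (hF : h.IsKinserFrame B C D E) : C.ncard + 2 ≤ r :=
  h.ncard_add_two_le hF.mem_BC hF.mem_CD (h.ne_of_rnk_union hF.mem_BC hF.rnk_BCD)
    (by tauto_set) (by tauto_set)

theorem inter_CD_DE (hF : h.IsKinserFrame B C D E) : (C ∪ D) ∩ (D ∪ E) = D :=
  h.inter_eq_of_subset hF.mem_CD hF.mem_DE (h.ne_of_rnk_union hF.mem_CD hF.rnk_CE) hF.ncard_D.ge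

theorem rnk_union_inter_add_three_le (hF : h.IsKinserFrame B C D E) (hI : h.matroid.IsIngleton) :
    h.matroid.rnk (B ∪ (C ∩ E)) + 3 ≤ r := by
  have hCE : C ∩ E ⊆ D := by have := hF.inter_CD_DE; clear * - this; tauto_set
  have hing : h.matroid.IngletonIneq C E (B ∪ (C ∩ E)) D := hI _ _ _ _
  unfold IngletonIneq at hing
  rw [show C ∪ (B ∪ C ∩ E) = B ∪ C by tauto_set, show E ∪ (B ∪ C ∩ E) = B ∪ E by tauto_set,
    show B ∪ C ∩ E ∪ D = B ∪ D by clear * - hCE; tauto_set, Set.union_right_comm B E D,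
    Set.union_comm E D] at hing
  have := h.rnk_add_one_of_mem hF.mem_BC
  have := h.rnk_add_one_of_mem hF.mem_BD
  have := h.rnk_add_one_of_mem hF.mem_BE
  have := h.rnk_add_one_of_mem hF.mem_CD
  have := h.rnk_add_one_of_mem hF.mem_DE
  have := hF.ncard_D
  have := hF.rnk_BCD
  have := hF.rnk_BDE
  have := hF.rnk_CE
  have := h.rnk_eq_min (h.notMem_of_ncard_lt (X := D) (by omega))
  omega

theorem rnk_union_add_rnk_union_le (hF : h.IsKinserFrame B C D E)
    (hv : ¬ h.matroid.KinserFiveIneq A B C D E) :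
    h.matroid.rnk (A ∪ C) + h.matroid.rnk (A ∪ E) + r
      ≤ h.matroid.rnk C + h.matroid.rnk E + h.matroid.rnk (A ∪ B) + 2 := by
  have := h.rnk_add_one_of_mem hF.mem_BC
  have := h.rnk_add_one_of_mem hF.mem_BD
  have := h.rnk_add_one_of_mem hF.mem_BE
  have := h.rnk_add_one_of_mem hF.mem_CD
  have := h.rnk_add_one_of_mem hF.mem_DE
  have := h.rnk_le (A ∪ C ∪ E)
  have := h.rnk_le (B ∪ C ∪ D)
  have := h.rnk_le (B ∪ D ∪ E)
  have := hF.ncard_D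
  have := rnk_le_ncard (M := h.matroid) D.toFinite
  unfold KinserFiveIneq at hv
  omega

theorem rnk_AC_lt (hF : h.IsKinserFrame B C D E)
    (hv : ¬ h.matroid.KinserFiveIneq A B C D E) : h.matroid.rnk (A ∪ C) < r := by
  have := hF.rnk_union_add_rnk_union_le hv
  have := h.matroid.rnk_add_rnk_le (A ∪ E) (B ∪ E) (A ∪ B) E
  have := h.rnk_add_one_of_mem hF.mem_BE
  have := rnk_le_ncard (M := h.matroid) C.toFinite
  have := hF.ncard_C_add_two_le
  omega

theorem of_union_AC_notMem (hF : h.IsKinserFrame B C D E) (hI : h.matroid.IsIngleton)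
    (hv : ¬ h.matroid.KinserFiveIneq A B C D E) (hAC : A ∪ C ∉ 𝓗) :
    A ∪ E ∈ 𝓗 ∧ A ⊆ C ∪ E ∧ r ≤ E.ncard + 2 ∧ r ≤ h.matroid.rnk (B ∪ (A ∩ C)) + 1 := by
  have hAC_AE := hF.rnk_union_add_rnk_union_le hv
  have hAC_lt := hF.rnk_AC_lt hv
  have hAE_lt := hF.symm.rnk_AC_lt (mt KinserFiveIneq.swap hv)
  have hC := hF.ncard_C_add_two_le
  have hE := hF.symm.ncard_C_add_two_le
  have hrnk_AC := h.rnk_eq_min hAC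
  have hrnk_C := h.rnk_eq_min (h.notMem_of_ncard_lt (X := C) (by omega))
  have hrnk_E := h.rnk_eq_min (h.notMem_of_ncard_lt (X := E) (by omega))
  have hcard_AC := Set.ncard_sdiff_add_ncard A C
  have hcard_AE := Set.ncard_sdiff_add_ncard A E
  have hcard_sub := Set.ncard_le_ncard (show (A ∩ C) \ E ⊆ A \ E by tauto_set)
  have hrnk_AB := h.matroid.rnk_union_le_rnk_add_ncard (B ∪ (A ∩ C)) (A \ C).toFinite
  rw [show B ∪ A ∩ C ∪ A \ C = A ∪ B by tauto_set] at hrnk_AB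
  have hrnk_B := h.matroid.rnk_union_le_rnk_add_ncard (B ∪ (C ∩ E)) ((A ∩ C) \ E).toFinite
  have hBAC := h.matroid.rnk_mono
    (show B ∪ (A ∩ C) ⊆ B ∪ (C ∩ E) ∪ (A ∩ C) \ E by clear * -; tauto_set)
  have hBCE := hF.rnk_union_inter_add_three_le hI
  have hBC := h.matroid.rnk_mono (show B ∪ (A ∩ C) ⊆ B ∪ C by tauto_set)
  have hBC_rnk := h.rnk_add_one_of_mem hF.mem_BC
  have hAE : A ∪ E ∈ 𝓗 := by
    by_contra hAE
    have := h.rnk_eq_min hAE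
    omega
  have hAE_card := h.ncard_eq _ hAE
  have hAE_rnk := h.rnk_add_one_of_mem hAE
  have hdiff : (A ∩ C) \ E = A \ E :=
    Set.eq_of_subset_of_ncard_le (by clear * -; tauto_set) (by omega)
  exact ⟨hAE, by clear * - hdiff; tauto_set, by omega, by omega⟩

theorem union_AE_ne (hF : h.IsKinserFrame B C D E)
    (hBAC : r ≤ h.matroid.rnk (B ∪ (A ∩ C)) + 1) : A ∪ E ≠ D ∪ E ∧ A ∪ E ≠ B ∪ E := by
  have not_subset : ∀ H ∈ 𝓗, B ∪ C ≠ H → ¬ B ∪ (A ∩ C) ⊆ H := by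
    intro H hH hne hsub
    have := h.ncard_add_two_le hF.mem_BC hH hne (X := B ∪ (A ∩ C)) (by tauto_set) hsub
    have := rnk_le_ncard (M := h.matroid) (B ∪ (A ∩ C)).toFinite
    omega
  constructor <;> intro heq
  · refine not_subset _ hF.mem_BD (h.ne_of_rnk_union hF.mem_BC hF.rnk_BCD) ?_
    have := hF.inter_CD_DE
    clear * - heq this
    tauto_set
  · refine not_subset _ hF.mem_BE (h.ne_of_rnk_union hF.mem_BC hF.rnk_CE) ?_
    clear * - heq
    tauto_set

theorem union_AC_mem (hF : h.IsKinserFrame B C D E) (hw : IsWheelFree r 𝓗)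
    (hv : ¬ h.matroid.KinserFiveIneq A B C D E) : A ∪ C ∈ 𝓗 := by
  by_contra hAC
  obtain ⟨hAE, hA, hE, hBAC⟩ := hF.of_union_AC_notMem (h.isIngleton hw) hv hAC
  obtain ⟨hAE_DE, hAE_BE⟩ := hF.union_AE_ne hBAC
  obtain ⟨hBC, hBD, hBE, hCD, hDE, hD, hBCD, hBDE, hCE⟩ := hF
  have hBDE_inter : r ≤ (B ∪ (D ∩ E)).ncard + 2 := by
    have := ncard_union_add_ncard_le B D E
    have := h.ncard_eq _ hBD
    have := h.ncard_eq _ hDE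
    omega
  have hACDE_inter : r ≤ ((A ∩ C) ∪ (E ∩ D)).ncard + 2 := by
    have := ncard_union_add_ncard_le (A ∩ C) E D
    rw [show A ∩ C ∪ E = A ∪ E by clear * - hA; tauto_set, Set.union_comm E D,
      h.ncard_eq _ hAE, h.ncard_eq _ hDE] at this
    omega
  -- The hub of the wheel is `D ∪ E`, its rim the cycle `A ∪ E`, `B ∪ E`, `B ∪ D`, `C ∪ D`.
  obtain heq | heq := hw _ hDE _ hAE _ hBE _ hBD _ hCD
    (adjacent_of_subset hAE_DE.symm hE)
    (adjacent_of_subset (h.ne_of_rnk_union hDE hBDE) hE)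
    (adjacent_of_subset (h.ne_of_rnk_union hDE hBDE) hD.ge)
    (adjacent_of_subset (h.ne_of_rnk_union hDE hCE) hD.ge)
    (adjacent_of_subset hAE_BE hE)
    (adjacent_of_subset (h.ne_of_rnk_union hBE hBDE) hBDE_inter)
    (adjacent_of_subset (h.ne_of_rnk_union hBD hBCD) hD.ge)
    (adjacent_of_subset (h.ne_of_rnk_union hCD hCE) hACDE_inter)
  · exact h.ne_of_rnk_union hAE hBDE (by clear * -; tauto_set) heq
  · exact h.ne_of_rnk_union hBE hBCD (by clear * -; tauto_set) heq

end IsKinserFrame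

end IsSparsePavingFamily

/-- A Kinser configuration: five sets that lie with respect to a family of circuit-hyperplanes of
rank `r` as the parts `V₁, …, V₅` do in the Kinser matroid of rank `r` with `V₁ ∪ V₂` relaxed. Over
a wheel-free family these are the quintuples that violate the fifth Kinser inequality. -/
structure IsKinserConfig (r : ℕ) (𝓗 : Set (Set α)) (A B C D E : Set α) : Prop where
  mem_AC : A ∪ C ∈ 𝓗
  mem_AE : A ∪ E ∈ 𝓗
  mem_BC : B ∪ C ∈ 𝓗
  mem_BD : B ∪ D ∈ 𝓗
  mem_BE : B ∪ E ∈ 𝓗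
  mem_CD : C ∪ D ∈ 𝓗
  mem_DE : D ∪ E ∈ 𝓗
  ncard_C : C.ncard + 2 = r
  ncard_D : D.ncard + 2 = r
  ncard_E : E.ncard + 2 = r
  union_CD_ne : C ∪ D ≠ D ∪ E
  notMem_AB : A ∪ B ∉ 𝓗
  le_ncard_AB : r ≤ (A ∪ B).ncard
  lt_ncard_ACE : r < (A ∪ C ∪ E).ncard
  lt_ncard_BCD : r < (B ∪ C ∪ D).ncard
  lt_ncard_BDE : r < (B ∪ D ∪ E).ncard

namespace IsSparsePavingFamily

variable [Finite α] {A B C D E : Set α}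

theorem not_kinserFiveIneq (h : IsSparsePavingFamily r 𝓗)
    (hcfg : IsKinserConfig r 𝓗 A B C D E) : ¬ h.matroid.KinserFiveIneq A B C D E := by
  obtain ⟨hAC, hAE, hBC, hBD, hBE, hCD, hDE, hC, hD, hE, -, hAB, hAB_le, hACE, hBCD,
    hBDE⟩ := hcfg
  have rnk_eq_of_lt : ∀ X : Set α, r < X.ncard → h.matroid.rnk X = r := fun X hX ↦ by
    rw [h.rnk_eq_min (h.notMem_of_lt_ncard hX), min_eq_right hX.le]
  have rnk_eq_of_gt : ∀ X : Set α, X.ncard + 2 = r → h.matroid.rnk X = X.ncard := fun X hX ↦ by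
    rw [h.rnk_eq_min (h.notMem_of_ncard_lt (by omega)), min_eq_left (by omega)]
  rw [KinserFiveIneq, rnk_eq_of_gt C hC, rnk_eq_of_gt D hD, rnk_eq_of_gt E hE,
    h.rnk_eq_min hAB, rnk_eq_of_lt _ hACE, rnk_eq_of_lt _ hBCD, rnk_eq_of_lt _ hBDE]
  have := h.rnk_add_one_of_mem hAC
  have := h.rnk_add_one_of_mem hAE
  have := h.rnk_add_one_of_mem hBC
  have := h.rnk_add_one_of_mem hBD
  have := h.rnk_add_one_of_mem hBE
  have := h.rnk_add_one_of_mem hCD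
  have := h.rnk_add_one_of_mem hDE
  omega

theorem isKinserConfig_of_not_kinserFiveIneq (h : IsSparsePavingFamily r 𝓗)
    (hw : IsWheelFree r 𝓗) (hv : ¬ h.matroid.KinserFiveIneq A B C D E) :
    IsKinserConfig r 𝓗 A B C D E := by
  have hF := h.isKinserFrame_of_not_kinserFiveIneq (h.isIngleton hw) hv
  have hAC := hF.union_AC_mem hw hv
  have hAE := hF.symm.union_AC_mem hw (mt KinserFiveIneq.swap hv)
  have hC := hF.ncard_C_add_two_le
  have hE := hF.symm.ncard_C_add_two_le
  obtain ⟨hBC, hBD, hBE, hCD, hDE, hD, hBCD, hBDE, hCE⟩ := hF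
  obtain ⟨hC', hE', hAB, hACE⟩ : C.ncard + 2 = r ∧ E.ncard + 2 = r ∧
      r ≤ h.matroid.rnk (A ∪ B) ∧ r ≤ h.matroid.rnk (A ∪ C ∪ E) := by
    have := h.rnk_add_one_of_mem hAC
    have := h.rnk_add_one_of_mem hAE
    have := h.rnk_add_one_of_mem hBC
    have := h.rnk_add_one_of_mem hBD
    have := h.rnk_add_one_of_mem hBE
    have := h.rnk_add_one_of_mem hCD
    have := h.rnk_add_one_of_mem hDE
    have := h.rnk_le (A ∪ B)
    have := h.rnk_le (A ∪ C ∪ E)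
    have := h.rnk_le (B ∪ C ∪ D)
    have := h.rnk_le (B ∪ D ∪ E)
    have := rnk_le_ncard (M := h.matroid) C.toFinite
    have := rnk_le_ncard (M := h.matroid) D.toFinite
    have := rnk_le_ncard (M := h.matroid) E.toFinite
    unfold KinserFiveIneq at hv
    omega
  exact
    { mem_AC := hAC, mem_AE := hAE, mem_BC := hBC, mem_BD := hBD, mem_BE := hBE
      mem_CD := hCD, mem_DE := hDE, ncard_C := hC', ncard_D := hD, ncard_E := hE'
      union_CD_ne := h.ne_of_rnk_union hCD hCE
      notMem_AB := fun hmem ↦ (h.rnk_lt_of_mem hmem).not_ge hAB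
      le_ncard_AB := hAB.trans (rnk_le_ncard (A ∪ B).toFinite)
      lt_ncard_ACE := h.lt_ncard_of_mem_of_subset hAC hACE
      lt_ncard_BCD := h.lt_ncard_of_mem_of_subset hBC hBCD
      lt_ncard_BDE := h.lt_ncard_of_mem_of_subset hBD hBDE }

end IsSparsePavingFamily

/-- An axis of a family of circuit-hyperplanes of a sparse paving matroid of rank `r`: a set of
`r - 2` elements, the largest size two members can share, that lies in three members. -/
structure IsAxis (r : ℕ) (𝓗 : Set (Set α)) (X : Set α) : Prop where
  ncard_add_two : X.ncard + 2 = r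
  exists_three_mem : ∃ H ∈ 𝓗, ∃ K ∈ 𝓗, ∃ L ∈ 𝓗, H ≠ K ∧ H ≠ L ∧ K ≠ L ∧ X ⊆ H ∩ K ∩ L

namespace IsKinserConfig

variable {A B C D E : Set α}

theorem symm (hcfg : IsKinserConfig r 𝓗 A B C D E) : IsKinserConfig r 𝓗 A B E D C where
  mem_AC := hcfg.mem_AE
  mem_AE := hcfg.mem_AC
  mem_BC := hcfg.mem_BE
  mem_BD := hcfg.mem_BD
  mem_BE := hcfg.mem_BC
  mem_CD := Set.union_comm D E ▸ hcfg.mem_DE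
  mem_DE := Set.union_comm C D ▸ hcfg.mem_CD
  ncard_C := hcfg.ncard_E
  ncard_D := hcfg.ncard_D
  ncard_E := hcfg.ncard_C
  union_CD_ne := Set.union_comm C D ▸ Set.union_comm D E ▸ hcfg.union_CD_ne.symm
  notMem_AB := hcfg.notMem_AB
  le_ncard_AB := hcfg.le_ncard_AB
  lt_ncard_ACE := Set.union_right_comm A C E ▸ hcfg.lt_ncard_ACE
  lt_ncard_BCD := Set.union_right_comm B D E ▸ hcfg.lt_ncard_BDE
  lt_ncard_BDE := Set.union_right_comm B C D ▸ hcfg.lt_ncard_BCD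

theorem union_BC_ne (hcfg : IsKinserConfig r 𝓗 A B C D E) (h : IsSparsePavingFamily r 𝓗) :
    B ∪ C ≠ C ∪ D := by
  intro heq
  have hlt := hcfg.lt_ncard_BCD
  rw [show B ∪ C ∪ D = B ∪ C by clear * - heq; tauto_set, h.ncard_eq _ hcfg.mem_BC] at hlt
  exact hlt.false

theorem union_BD_ne (hcfg : IsKinserConfig r 𝓗 A B C D E) (h : IsSparsePavingFamily r 𝓗) :
    B ∪ D ≠ C ∪ D := by
  intro heq
  have hlt := hcfg.lt_ncard_BCD
  rw [show B ∪ C ∪ D = B ∪ D by clear * - heq; tauto_set, h.ncard_eq _ hcfg.mem_BD] at hlt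
  exact hlt.false

theorem isAxis_D (hcfg : IsKinserConfig r 𝓗 A B C D E) (h : IsSparsePavingFamily r 𝓗) :
    IsAxis r 𝓗 D :=
  ⟨hcfg.ncard_D, _, hcfg.mem_BD, _, hcfg.mem_CD, _, hcfg.mem_DE, hcfg.union_BD_ne h,
    Set.union_comm E D ▸ hcfg.symm.union_BD_ne h, hcfg.union_CD_ne, by tauto_set⟩

variable [Finite α]

theorem not_union_AB_subset (hcfg : IsKinserConfig r 𝓗 A B C D E) (h : IsSparsePavingFamily r 𝓗)
    (hH : H ∈ 𝓗) : ¬ A ∪ B ⊆ H := fun hsub ↦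
  hcfg.notMem_AB (Set.eq_of_subset_of_ncard_le hsub
    ((h.ncard_eq H hH).trans_le hcfg.le_ncard_AB) ▸ hH)

theorem union_AC_ne (hcfg : IsKinserConfig r 𝓗 A B C D E) (h : IsSparsePavingFamily r 𝓗)
    (hr : r ≤ 5) : A ∪ C ≠ C ∪ D := by
  intro hAC
  have hCD_DE : (C ∪ D) ∩ (D ∪ E) = D :=
    h.inter_eq_of_subset hcfg.mem_CD hcfg.mem_DE hcfg.union_CD_ne hcfg.ncard_D.ge
  have hAE_ne : A ∪ E ≠ D ∪ E := by
    intro hAE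
    refine hcfg.not_union_AB_subset h hcfg.mem_BD ?_
    clear * - hAC hAE hCD_DE
    tauto_set
  have hAE_DE : (A ∪ E) ∩ (D ∪ E) = E :=
    h.inter_eq_of_subset hcfg.mem_AE hcfg.mem_DE hAE_ne hcfg.ncard_E.ge
  have hsub : D \ C ⊆ D ∩ E := by
    clear * - hAC hAE_DE
    tauto_set
  have hle := Set.ncard_le_ncard hsub
  have hCD := Set.ncard_sdiff_add_ncard D C
  rw [Set.union_comm, h.ncard_eq _ hcfg.mem_CD] at hCD
  have hDE := Set.ncard_union_add_ncard_inter D E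
  rw [h.ncard_eq _ hcfg.mem_DE] at hDE
  have := hcfg.ncard_C
  have := hcfg.ncard_D
  have := hcfg.ncard_E
  omega

theorem isAxis_C (hcfg : IsKinserConfig r 𝓗 A B C D E) (h : IsSparsePavingFamily r 𝓗)
    (hr : r ≤ 5) : IsAxis r 𝓗 C := by
  refine ⟨hcfg.ncard_C, _, hcfg.mem_AC, _, hcfg.mem_BC, _, hcfg.mem_CD, fun heq ↦ ?_,
    hcfg.union_AC_ne h hr, hcfg.union_BC_ne h, by tauto_set⟩
  refine hcfg.not_union_AB_subset h hcfg.mem_AC ?_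
  clear * - heq
  tauto_set

theorem two_lt_ncard_setOf_isAxis (hcfg : IsKinserConfig r 𝓗 A B C D E)
    (h : IsSparsePavingFamily r 𝓗) (hr : r ≤ 5) : 2 < {X | IsAxis r 𝓗 X}.ncard := by
  have hCD : C ≠ D := by
    rintro rfl
    have := h.ncard_eq _ hcfg.mem_CD
    rw [Set.union_self] at this
    have := hcfg.ncard_C
    omega
  have hDE : D ≠ E := by
    rintro rfl
    have := h.ncard_eq _ hcfg.mem_DE
    rw [Set.union_self] at this
    have := hcfg.ncard_D
    omega
  have hCE : C ≠ E := fun heq ↦ hcfg.union_CD_ne (heq ▸ Set.union_comm C D)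
  exact (Set.two_lt_ncard_iff (Set.toFinite _)).2 ⟨C, D, E, hcfg.isAxis_C h hr,
    hcfg.isAxis_D h, hcfg.symm.isAxis_C h hr, hCD, hCE, hDE⟩

end IsKinserConfig

end SparsePaving

section Witness

/-- The parts `V₁, …, V₅` of the ground set of the Kinser matroid `Kin(5)`, realised as
subsets of `Fin 10`; indices outside `1, …, 5` are junk. -/
def kinserPart : ℕ → Finset (Fin 10)
  | 1 => {3, 5, 9}
  | 2 => {7, 8}
  | 3 => {0, 3, 4}
  | 4 => {0, 1, 2}
  | 5 => {1, 5, 6}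
  | _ => ∅

/-- The circuit-hyperplanes of `Kin(5)⁻`: those of `Kin(5)` other than the relaxed `V₁ ∪ V₂`. -/
def kinserHyperplane : Fin 7 → Finset (Fin 10) :=
  ![kinserPart 1 ∪ kinserPart 3, kinserPart 1 ∪ kinserPart 5, kinserPart 2 ∪ kinserPart 3,
    kinserPart 2 ∪ kinserPart 4, kinserPart 2 ∪ kinserPart 5, kinserPart 3 ∪ kinserPart 4,
    kinserPart 4 ∪ kinserPart 5]

/-- The set of circuit-hyperplanes of `Kin(5)⁻`. -/
def kinserFamily : Set (Set (Fin 10)) :=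
  Set.range fun i ↦ (kinserHyperplane i : Set (Fin 10))

theorem isSparsePavingFamily_kinserFamily : IsSparsePavingFamily 5 kinserFamily where
  pos := by decide
  ncard_eq := by
    rintro _ ⟨i, rfl⟩
    rw [Set.ncard_coe_finset]
    revert i
    decide
  ncard_inter_add_two_le := by
    have card_inter : ∀ i j, i ≠ j → (kinserHyperplane i ∩ kinserHyperplane j).card + 2 ≤ 5 := by
      decide
    rintro _ ⟨i, rfl⟩ _ ⟨j, rfl⟩ hne
    rw [← Finset.coe_inter, Set.ncard_coe_finset]
    exact card_inter i j fun hij ↦ hne (hij ▸ rfl)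

theorem adjacent_coe_iff {r : ℕ} [DecidableEq α] {S T : Finset α} :
    Adjacent r (S : Set α) T ↔ S ≠ T ∧ r ≤ (S ∩ T).card + 2 := by
  rw [Adjacent, ← Finset.coe_inter, Set.ncard_coe_finset, Ne, Finset.coe_inj]

instance Adjacent.decidable {r : ℕ} [DecidableEq α] {S T : Finset α} :
    Decidable (Adjacent r (S : Set α) T) :=
  decidable_of_iff _ adjacent_coe_iff.symm

theorem isWheelFree_kinserFamily : IsWheelFree 5 kinserFamily := by
  -- Each adjacency is required as soon as its two ends are quantified, which prunes the search.
  have wheelFree : ∀ i j₁, Adjacent 5 (kinserHyperplane i : Set (Fin 10)) (kinserHyperplane j₁) →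
      ∀ j₂, Adjacent 5 (kinserHyperplane i : Set (Fin 10)) (kinserHyperplane j₂) →
        Adjacent 5 (kinserHyperplane j₁ : Set (Fin 10)) (kinserHyperplane j₂) →
      ∀ j₃, Adjacent 5 (kinserHyperplane i : Set (Fin 10)) (kinserHyperplane j₃) →
        Adjacent 5 (kinserHyperplane j₂ : Set (Fin 10)) (kinserHyperplane j₃) →
      ∀ j₄, Adjacent 5 (kinserHyperplane i : Set (Fin 10)) (kinserHyperplane j₄) →
        Adjacent 5 (kinserHyperplane j₃ : Set (Fin 10)) (kinserHyperplane j₄) →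
        Adjacent 5 (kinserHyperplane j₄ : Set (Fin 10)) (kinserHyperplane j₁) →
      j₁ = j₃ ∨ j₂ = j₄ := by
    decide +kernel
  rintro _ ⟨i, rfl⟩ _ ⟨j₁, rfl⟩ _ ⟨j₂, rfl⟩ _ ⟨j₃, rfl⟩ _ ⟨j₄, rfl⟩ a₁ a₂ a₃ a₄ a₁₂ a₂₃ a₃₄ a₄₁
  exact (wheelFree i j₁ a₁ j₂ a₂ a₁₂ j₃ a₃ a₂₃ j₄ a₄ a₃₄ a₄₁).imp (by rintro rfl; rfl)
    (by rintro rfl; rfl)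

theorem isKinserConfig_kinserFamily :
    IsKinserConfig 5 kinserFamily (kinserPart 1) (kinserPart 2) (kinserPart 3) (kinserPart 4)
      (kinserPart 5) where
  mem_AC := ⟨0, Finset.coe_union _ _⟩
  mem_AE := ⟨1, Finset.coe_union _ _⟩
  mem_BC := ⟨2, Finset.coe_union _ _⟩
  mem_BD := ⟨3, Finset.coe_union _ _⟩
  mem_BE := ⟨4, Finset.coe_union _ _⟩
  mem_CD := ⟨5, Finset.coe_union _ _⟩
  mem_DE := ⟨6, Finset.coe_union _ _⟩
  ncard_C := by rw [Set.ncard_coe_finset]; rfl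
  ncard_D := by rw [Set.ncard_coe_finset]; rfl
  ncard_E := by rw [Set.ncard_coe_finset]; rfl
  union_CD_ne := by
    rw [← Finset.coe_union, ← Finset.coe_union, Ne, Finset.coe_inj]
    decide
  notMem_AB := by
    rintro ⟨i, hi⟩
    rw [← Finset.coe_union, Finset.coe_inj] at hi
    revert i
    decide
  le_ncard_AB := by
    rw [← Finset.coe_union, Set.ncard_coe_finset]
    decide
  lt_ncard_ACE := by
    rw [← Finset.coe_union, ← Finset.coe_union, Set.ncard_coe_finset]
    decide
  lt_ncard_BCD := by
    rw [← Finset.coe_union, ← Finset.coe_union, Set.ncard_coe_finset]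
    decide
  lt_ncard_BDE := by
    rw [← Finset.coe_union, ← Finset.coe_union, Set.ncard_coe_finset]
    decide

theorem setOf_isAxis_compl_kinserFamily_subset :
    {X | IsAxis 5 (compl '' kinserFamily) X} ⊆ {{5, 6, 9}, {3, 4, 9}} := by
  have inter_eq : ∀ i j k, i ≠ j → i ≠ k → j ≠ k →
      3 ≤ ((kinserHyperplane i)ᶜ ∩ (kinserHyperplane j)ᶜ ∩ (kinserHyperplane k)ᶜ).card →
      (kinserHyperplane i)ᶜ ∩ (kinserHyperplane j)ᶜ ∩ (kinserHyperplane k)ᶜ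
        ∈ ({{5, 6, 9}, {3, 4, 9}} : Finset (Finset (Fin 10))) := by
    decide +kernel
  have card_eq : ∀ S ∈ ({{5, 6, 9}, {3, 4, 9}} : Finset (Finset (Fin 10))), S.card = 3 := by
    simp
  rintro X ⟨hX, _, ⟨_, ⟨i, rfl⟩, rfl⟩, _, ⟨_, ⟨j, rfl⟩, rfl⟩, _, ⟨_, ⟨k, rfl⟩, rfl⟩,
    hij, hik, hjk, hsub⟩
  simp only [← Finset.coe_compl, ← Finset.coe_inter] at hsub
  have hcard := Set.ncard_le_ncard hsub
  rw [Set.ncard_coe_finset] at hcard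
  have hmem := inter_eq i j k (hij <| · ▸ rfl) (hik <| · ▸ rfl) (hjk <| · ▸ rfl) (by omega)
  have hXeq := Set.eq_of_subset_of_ncard_le hsub (by
    rw [Set.ncard_coe_finset, card_eq _ hmem]
    omega)
  rw [Finset.mem_insert, Finset.mem_singleton] at hmem
  rw [hXeq]
  exact hmem.imp (by simp [·]) (by simp [·])

theorem not_isKinserConfig_compl_kinserFamily {A B C D E : Set (Fin 10)} :
    ¬ IsKinserConfig 5 (compl '' kinserFamily) A B C D E := by
  intro hcfg
  have hlt := hcfg.two_lt_ncard_setOf_isAxis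
    (isSparsePavingFamily_kinserFamily.image_compl (by decide) (by simp)) le_rfl
  have hle := Set.ncard_le_ncard setOf_isAxis_compl_kinserFamily_subset
  have hpair := Set.ncard_insert_le ({5, 6, 9} : Set (Fin 10)) {{3, 4, 9}}
  rw [Set.ncard_singleton] at hpair
  omega

end Witness

end Matroid

/-- There is a finite matroid `M ∈ K 4 − K 5` whose dual lies in `K 5`. -/
theorem Matroid.exists_memKinserClass_four_not_five_dual_five :
    ∃ (α : Type) (M : Matroid α), M.Finite ∧ M.MemKinserClass 4 ∧
      ¬ M.MemKinserClass 5 ∧ M✶.MemKinserClass 5 := by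
  have h := isSparsePavingFamily_kinserFamily
  have hw := isWheelFree_kinserFamily
  have hcard : 5 + 5 = Nat.card (Fin 10) := by simp
  refine ⟨Fin 10, h.matroid, inferInstance, fun X _ ↦ ?_, fun hK ↦ ?_, fun X _ ↦ ?_⟩
  · exact kinserIneq_four_iff.2 (h.isIngleton hw _ _ _ _)
  · have hV := hK (fun i ↦ kinserPart i) fun i _ ↦ Set.subset_univ _
    rw [kinserIneq_five_iff] at hV
    exact h.not_kinserFiveIneq isKinserConfig_kinserFamily hV
  · rw [h.dual_matroid (by decide) hcard, kinserIneq_five_iff]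
    by_contra hv
    exact not_isKinserConfig_compl_kinserFamily
      ((h.image_compl (by decide) hcard).isKinserConfig_of_not_kinserFiveIneq
        (hw.image_compl h hcard) hv)
end

section
/- Let 𝕂 be an infinite field and let N be a finite matroid representable over 𝕂. Then there exists a finite matroid M that is an excluded minor for 𝕂-representability — i.e. M is not representable over 𝕂 but every proper minor of M is representable over 𝕂 — such that N is a minor of M. -/
open Finset

universe u v

/-!
Let `N` be a minor of the matroid of a family of vectors `ψ` in a space `V` that consists of
bases `A` and `B` of two distinct hyperplanes. In a space of one dimension more, add four points
`0, 1, 2, 3` of a generic plane such that the lines through `0, 1` and through `2, 3` meet `V` in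
the same generic point of the intersection of both hyperplanes. The sets `A ∪ {0, 1}`,
`B ∪ {0, 1}`, `A ∪ {2, 3}` and `B ∪ {2, 3}` are then circuit-hyperplanes. Relaxing the last one
gives a matroid that generalizes the Vámos matroid and still has `N` as a minor; it violates the
Ingleton inequality, so it is not representable. After a single element is deleted or contracted,
at least one of the four sets plays no role any more, and the remaining pattern of dependent sets
is realized by moving the points in which the two lines meet `V`.
-/

open Module Set

open Submodule (span)

lemma inf_eq_inf_of_isCoatom {α : Type*} [Lattice α] [IsModularLattice α] [OrderTop α]
    {a b c : α} (hb : IsCoatom b) (hab : ¬ a ≤ b) (hc : a ⊓ b ≤ c) (hac : ¬ a ≤ c) :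
    a ⊓ c = a ⊓ b := by
  have hcov : a ⊓ b ⋖ a := by
    refine CovBy.inf_of_sup_right ?_
    rw [hb.2 _ (right_lt_sup.2 hab)]
    exact hb.covBy_top
  exact (hcov.eq_or_eq (le_inf inf_le_left hc) inf_le_left).resolve_right
    fun h ↦ hac (inf_eq_left.1 h)

section LinearAlgebra

variable {ι κ K V W : Type*} [Field K] [AddCommGroup V] [Module K V] [AddCommGroup W] [Module K W]

lemma finrank_span_image_eq_ncard {v : ι → V} {s : Set ι} (hs : LinearIndepOn K v s)
    (hfin : s.Finite) : finrank K (span K (v '' s)) = s.ncard := by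
  have := hfin.fintype
  rw [image_eq_range, finrank_span_eq_card hs.linearIndependent, ← Nat.card_eq_fintype_card,
    Nat.card_coe_set_eq]

lemma span_image_ne_top {v : ι → V} {s : Set ι} (hs : LinearIndepOn K v s) (hfin : s.Finite)
    (hcard : s.ncard ≠ finrank K V) : span K (v '' s) ≠ ⊤ := fun h ↦
  hcard <| by rw [← finrank_span_image_eq_ncard hs hfin, h, finrank_top]

lemma linearIndepOn_image_iff_of_injOn {v : κ → V} {f : ι → κ} {s : Set ι} (hf : InjOn f s) :
    LinearIndepOn K v (f '' s) ↔ LinearIndepOn K (v ∘ f) s :=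
  ⟨fun h ↦ h.comp_of_image hf, LinearIndepOn.image_of_comp f v⟩

lemma linearIndepOn_union_iff_of_span_eq_ker {v : ι → V} {s t : Set ι} (hst : Disjoint s t)
    {f : V →ₗ[K] W} (hf : span K (v '' s) = LinearMap.ker f) :
    LinearIndepOn K v (s ∪ t) ↔ LinearIndepOn K v s ∧ LinearIndepOn K (f ∘ v) t := by
  have hinj : Function.Injective ((span K (v '' s)).liftQ f hf.le) :=
    LinearMap.ker_eq_bot.1 <| Submodule.ker_liftQ_eq_bot' _ f hf
  rw [linearIndepOn_union_iff_quotient hst,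
    ← LinearMap.linearIndepOn_iff_of_injOn _ hinj.injOn (v := _ ∘ v)]
  rfl

lemma notMem_span_image_of_forall_eq_zero {ψ : ι → V} {X : Set ι} {e : ι}
    (f : V →ₗ[K] K) (hX : ∀ x ∈ X, f (ψ x) = 0) (he : f (ψ e) ≠ 0) :
    ψ e ∉ span K (ψ '' X) := fun h ↦
  he <| (Submodule.span_le (p := LinearMap.ker f)).2 (by simpa [Set.subset_def] using hX) h

lemma linearIndependent_option_elim_prodMk [Finite κ] (b : Basis κ K V) {p : W} (hp : p ≠ 0) :
    LinearIndependent K (fun i : Option κ ↦ (i.elim 0 b, p)) := by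
  have := Fintype.ofFinite κ
  refine Fintype.linearIndependent_iff.2 fun g hg ↦ ?_
  simp only [Fintype.sum_option, Prod.ext_iff, Prod.fst_add, Prod.snd_add, Prod.fst_sum,
    Prod.snd_sum, Prod.smul_mk, Option.elim_none, Option.elim_some, smul_zero, zero_add,
    Prod.fst_zero, Prod.snd_zero] at hg
  have hsome (k : κ) : g (some k) = 0 :=
    Fintype.linearIndependent_iff.1 b.linearIndependent _ hg.1 k
  have hnone : g none = 0 := by simpa [hsome, hp] using hg.2
  exact Option.forall.2 ⟨hnone, hsome⟩

end LinearAlgebra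

section GeneralPosition

variable {ι κ K V : Type*} [Field K] [Infinite K] [AddCommGroup V] [Module K V]

open scoped Pointwise in
lemma exists_forall_sub_notMem [Finite κ] (P : κ → Submodule K V) (t : κ → V) :
    ∃ v, ∀ i, P i ≠ ⊤ → v - t i ∉ P i := by
  have := Fintype.ofFinite {i // P i ≠ ⊤}
  by_contra! hcover
  have hcover' : ⋃ i ∈ (Finset.univ : Finset {i // P i ≠ ⊤}),
      t i +ᵥ ((P i).toAddSubgroup : Set V) = univ := by
    refine eq_univ_iff_forall.2 fun v ↦ ?_
    obtain ⟨i, hi, hv⟩ := hcover v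
    exact mem_biUnion (Finset.mem_univ ⟨i, hi⟩) ⟨v - t i, hv, by simp⟩
  obtain ⟨⟨i, hi⟩, -, hfinite⟩ := AddSubgroup.exists_finiteIndex_of_leftCoset_cover hcover'
  have : Finite (V ⧸ P i) := AddSubgroup.finite_quotient_of_finiteIndex
  have : Nontrivial (V ⧸ P i) := Submodule.Quotient.nontrivial_iff.2 hi
  exact not_finite_iff_infinite.2 (Module.Free.infinite K (V ⧸ P i)) ‹_›

lemma exists_mem_forall_notMem [Finite κ] (U : Submodule K V) (P : κ → Submodule K V) :
    ∃ q ∈ U, ∀ i, ¬ U ≤ P i → q ∉ P i := by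
  obtain ⟨⟨q, hq⟩, h⟩ := exists_forall_sub_notMem (fun i ↦ (P i).comap U.subtype) 0
  refine ⟨q, hq, fun i hi ↦ ?_⟩
  simpa using h i <| by rwa [Ne, Submodule.comap_subtype_eq_top]

lemma exists_forall_notMem_span [Finite ι] (ψ : ι → V) (q : V) {R : Set K} (hR : R.Finite) :
    ∃ v, ∀ X, (span K (ψ '' X) ≠ ⊤ → ∀ r ∈ R, v - r • q ∉ span K (ψ '' X)) ∧
      (span K (ψ '' X) ⊔ span K {q} ≠ ⊤ → v ∉ span K (ψ '' X) ⊔ span K {q}) := by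
  have := hR.to_subtype
  obtain ⟨v, hv⟩ := exists_forall_sub_notMem (κ := Set ι × Option R)
    (fun i ↦ i.2.elim (span K (ψ '' i.1) ⊔ span K {q}) fun _ ↦ span K (ψ '' i.1))
    (fun i ↦ i.2.elim 0 fun r ↦ r.1 • q)
  refine ⟨v, fun X ↦ ⟨fun hX r hr ↦ hv (X, some ⟨r, hr⟩) hX, fun hX ↦ ?_⟩⟩
  simpa using hv (X, none) hX

end GeneralPosition

section Ingleton

variable {K V : Type*} [Field K] [AddCommGroup V] [Module K V]

lemma finrank_ingleton_le (U₁ U₂ U₃ U₄ : Submodule K V) [FiniteDimensional K U₁]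
    [FiniteDimensional K U₂] [FiniteDimensional K U₃] [FiniteDimensional K U₄] :
    finrank K U₃ + finrank K U₄ + finrank K ↥(U₁ ⊔ U₂) + finrank K ↥(U₁ ⊔ U₃ ⊔ U₄) +
        finrank K ↥(U₂ ⊔ U₃ ⊔ U₄) ≤
      finrank K ↥(U₁ ⊔ U₃) + finrank K ↥(U₁ ⊔ U₄) + finrank K ↥(U₂ ⊔ U₃) +
        finrank K ↥(U₂ ⊔ U₄) + finrank K ↥(U₃ ⊔ U₄) := by
  have modular (P Q : Submodule K V) [FiniteDimensional K P] [FiniteDimensional K Q] :=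
    Submodule.finrank_sup_add_finrank_inf_eq P Q
  have inf_inf_le (U : Submodule K V) [FiniteDimensional K U] :
      finrank K ↥(U ⊓ U₃) + finrank K ↥(U ⊓ U₄) ≤
        finrank K ↥(U ⊓ (U₃ ⊔ U₄)) + finrank K ↥(U ⊓ (U₃ ⊓ U₄)) := by
    rw [← modular, inf_inf_inf_comm, inf_idem]
    gcongr
    exact Submodule.finrank_mono <| sup_le (inf_le_inf_left _ le_sup_left)
      (inf_le_inf_left _ le_sup_right)
  have inf_le : finrank K ↥(U₁ ⊓ (U₃ ⊓ U₄)) + finrank K ↥(U₂ ⊓ (U₃ ⊓ U₄)) ≤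
      finrank K ↥(U₁ ⊓ U₂) + finrank K ↥(U₃ ⊓ U₄) := by
    rw [← modular, add_comm]
    gcongr ?_ + ?_
    · exact Submodule.finrank_mono <| le_inf (inf_le_left.trans inf_le_left)
        (inf_le_right.trans inf_le_left)
    · exact Submodule.finrank_mono <| sup_le inf_le_right inf_le_right
  have h₁ := inf_inf_le U₁
  have h₂ := inf_inf_le U₂
  have h₁₂ := modular U₁ U₂
  have h₁₃ := modular U₁ U₃
  have h₁₄ := modular U₁ U₄
  have h₂₃ := modular U₂ U₃
  have h₂₄ := modular U₂ U₄
  have h₃₄ := modular U₃ U₄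
  have h₁₃₄ := modular U₁ (U₃ ⊔ U₄)
  have h₂₃₄ := modular U₂ (U₃ ⊔ U₄)
  rw [sup_assoc, sup_assoc]
  omega

end Ingleton

local notation:65 X:65 "⊎" Y:66 => Sum.inl '' X ∪ Sum.inr '' Y

section SumSet

variable {ι κ : Type*}

lemma preimage_inl_image_inl_union_image_inr (X : Set ι) (Y : Set κ) : Sum.inl ⁻¹' (X ⊎ Y) = X := by
  ext; simp

lemma preimage_inr_image_inl_union_image_inr (X : Set ι) (Y : Set κ) : Sum.inr ⁻¹' (X ⊎ Y) = Y := by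
  ext; simp

lemma ncard_image_inl_union_image_inr [Finite ι] [Finite κ] (X : Set ι) (Y : Set κ) :
    (X ⊎ Y).ncard = X.ncard + Y.ncard := by
  rw [ncard_union_eq disjoint_image_inl_image_inr,
    ncard_image_of_injective _ Sum.inl_injective, ncard_image_of_injective _ Sum.inr_injective]

end SumSet

section Lift

variable {ι κ K V W : Type*} [Field K] [AddCommGroup V] [Module K V] [AddCommGroup W] [Module K W]

variable (K) in
/-- The vectors of `ψ` placed at height zero, as points at infinity, and the affine points `y`
placed at height one. -/
def liftFamily (ψ : ι → V) (y : κ → V) : ι ⊕ κ → V × K :=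
  Sum.elim (fun j ↦ (ψ j, 0)) (fun i ↦ (y i, 1))

lemma linearIndepOn_liftFamily_iff {ψ : ι → V} {y : κ → V} {X : Set ι} {Y : Set κ} :
    LinearIndepOn K (liftFamily K ψ y) (X ⊎ Y) ↔ LinearIndepOn K ψ X ∧
      LinearIndepOn K (fun i ↦ ((span K (ψ '' X)).mkQ (y i), (1 : K))) Y := by
  set P := span K (ψ '' X) with hP
  have hψ : liftFamily K ψ y ∘ Sum.inl = LinearMap.inl K V K ∘ ψ := rfl
  have hspan : span K (liftFamily K ψ y '' (Sum.inl '' X)) =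
      LinearMap.ker (P.mkQ.prodMap LinearMap.id) := by
    rw [← image_comp, hψ, image_comp, Submodule.span_image, ← hP, LinearMap.ker_prodMap,
      Submodule.ker_mkQ, LinearMap.ker_id]
    exact Submodule.map_inl P
  rw [linearIndepOn_union_iff_of_span_eq_ker disjoint_image_inl_image_inr hspan,
    linearIndepOn_image_iff_of_injOn Sum.inl_injective.injOn, hψ,
    LinearMap.linearIndepOn_iff_of_injOn _ LinearMap.inl_injective.injOn,
    linearIndepOn_image_iff_of_injOn Sum.inr_injective.injOn]
  rfl

lemma linearIndepOn_prodMk_one_pair {y : κ → W} {i j : κ} (hij : i ≠ j) :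
    LinearIndepOn K (fun k ↦ (y k, (1 : K))) {i, j} ↔ y i ≠ y j := by
  rw [LinearIndepOn.pair_iff _ hij]
  refine ⟨fun h hy ↦ ?_, fun hy s t hst ↦ ?_⟩
  · simpa using h 1 (-1) (by simp [hy])
  · simp only [Prod.smul_mk, Prod.mk_add_mk, Prod.mk_eq_zero, smul_eq_mul, mul_one] at hst
    obtain rfl : t = -s := by linear_combination hst.2
    have : s • (y i - y j) = 0 := by rw [← hst.1]; module
    simpa [sub_eq_zero, hy] using this

end Lift

section QuadPoints

variable {ι K V W : Type*} [Field K] [AddCommGroup V] [Module K V] [AddCommGroup W] [Module K W]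

/-- Four coplanar affine points such that the line through the points `0` and `1` meets the line at
infinity in `q + ν • v` and the line through the points `2` and `3` meets it in
`q + (μ - 1) • v`. -/
def quadPoints (ν μ : K) (q v : V) : Fin 4 → V := ![0, q + ν • v, v, q + μ • v]

lemma map_quadPoints (f : V →ₗ[K] W) (ν μ : K) (q v : V) (i : Fin 4) :
    f (quadPoints ν μ q v i) = quadPoints ν μ (f q) (f v) i := by
  fin_cases i <;> simp [quadPoints]

variable {ν μ : K} {q v : V}

variable (ν μ) in
/-- The coefficients `r` for which two of the points `quadPoints ν μ q (r • q)` can coincide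
although `q ≠ 0`. -/
def quadRatios : Set K := (fun a ↦ -a⁻¹) '' {0, ν, ν - 1, μ, μ - 1}

lemma add_smul_eq_zero_iff_of_ne {a : K} (hva : v ≠ -a⁻¹ • q) :
    q + a • v = 0 ↔ q = 0 ∧ a = 0 := by
  refine ⟨fun h ↦ ?_, fun ⟨hq, ha⟩ ↦ by simp [hq, ha]⟩
  obtain rfl | ha := eq_or_ne a 0
  · simpa using h
  · refine absurd ?_ hva
    rw [eq_neg_of_add_eq_zero_left h, neg_smul_neg, inv_smul_smul₀ ha]

lemma quadPoints_eq_iff (hμ : μ ≠ 0) (hν : ν ≠ 1) (hμν : μ ≠ ν)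
    (hv : ∀ r ∈ quadRatios ν μ, v ≠ r • q) {i j : Fin 4} (hij : i < j) :
    quadPoints ν μ q v i = quadPoints ν μ q v j ↔
      q = 0 ∧ (i = 0 ∧ j = 1 ∧ ν = 0 ∨ i = 2 ∧ j = 3 ∧ μ = 1) := by
  rw [quadRatios, forall_mem_image] at hv
  have hv₀ : v ≠ 0 := by simpa using @hv 0 (by simp)
  have h {a : K} (ha : a ∈ ({0, ν, ν - 1, μ, μ - 1} : Set K)) : q + a • v = 0 ↔ q = 0 ∧ a = 0 :=
    add_smul_eq_zero_iff_of_ne (hv ha)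
  have h' {a : K} (ha : a - 1 ∈ ({0, ν, ν - 1, μ, μ - 1} : Set K)) :
      v = q + a • v ↔ q = 0 ∧ a = 1 := by
    rw [← sub_eq_zero (a := a), ← h ha, sub_smul, one_smul, ← add_sub_assoc, sub_eq_zero, eq_comm]
  fin_cases i <;> fin_cases j <;> first | exact absurd hij (by decide) | skip
  · simp [quadPoints, eq_comm (a := (0 : V)), h]
  · simp [quadPoints, hv₀.symm]
  · simp [quadPoints, eq_comm (a := (0 : V)), h, hμ]
  · simp [quadPoints, eq_comm (b := v), h', hν]
  · simp [quadPoints, smul_left_inj hv₀, hμν.symm]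
  · simp [quadPoints, h']

lemma linearIndepOn_iff_forall_sum_eq_zero [Fintype ι] {y : ι → V} {Y : Set ι} :
    LinearIndepOn K y Y ↔ ∀ a : ι → K, (∀ i ∉ Y, a i = 0) → ∑ i, a i • y i = 0 → a = 0 := by
  rw [linearIndepOn_iff, ← (Finsupp.linearEquivFunOnFinite K K ι).forall_congr_right]
  simp [Finsupp.mem_supported', Finsupp.linearCombination_apply, Finsupp.sum_fintype]

lemma linearIndepOn_quadPoints (hμν : μ ≠ ν) (hqv : LinearIndependent K ![q, v])
    {Y : Set (Fin 4)} (hY : Y ≠ univ) :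
    LinearIndepOn K (fun i ↦ (quadPoints ν μ q v i, (1 : K))) Y := by
  obtain ⟨k, hk⟩ := (ne_univ_iff_exists_notMem Y).1 hY
  refine linearIndepOn_iff_forall_sum_eq_zero.2 fun a haY ha ↦ ?_
  simp only [Fin.sum_univ_four, Prod.smul_mk, Prod.mk_add_mk, Prod.mk_eq_zero, smul_eq_mul,
    mul_one] at ha
  obtain ⟨hq, hv⟩ := LinearIndependent.pair_iff.1 hqv (a 1 + a 3) (ν * a 1 + a 2 + μ * a 3) <| by
    rw [← ha.1]; simp [quadPoints]; module
  have ha_eq : a = a 3 • ![μ - ν, -1, ν - μ, 1] := by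
    ext i
    fin_cases i <;> simp
    · linear_combination ha.2 - hv + (ν - 1) * hq
    · linear_combination hq
    · linear_combination hv - ν * hq
  have ha₃ : a 3 = 0 := by
    have hak := ha_eq ▸ haY k hk
    fin_cases k <;> simpa [sub_eq_zero, hμν, hμν.symm] using hak
  rw [ha_eq, ha₃, zero_smul]

lemma not_linearIndepOn_quadPoints :
    ¬ LinearIndepOn K (fun i ↦ (quadPoints ν μ q v i, (1 : K))) univ := fun h ↦ by
  have := linearIndepOn_iff_forall_sum_eq_zero.1 h ![μ - ν, -1, ν - μ, 1] (by simp) <| by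
    simp only [Fin.sum_univ_four, quadPoints]
    ext
    · simp; module
    · simp; ring
  simpa using congr_fun this 3

lemma linearIndepOn_quadPoints_iff {ν μ : K} {q v : V} {Y : Set (Fin 4)} (hμ : μ ≠ 0) (hν : ν ≠ 1)
    (hμν : μ ≠ ν) (hY : Y.Nonempty) (hv : 2 ≤ Y.ncard → ∀ r ∈ quadRatios ν μ, v ≠ r • q)
    (hqv : 3 ≤ Y.ncard → LinearIndependent K ![q, v]) :
    LinearIndepOn K (fun i ↦ (quadPoints ν μ q v i, (1 : K))) Y ↔
      Y ≠ univ ∧ (Y = {0, 1} → ¬ (ν = 0 ∧ q = 0)) ∧ (Y = {2, 3} → ¬ (μ = 1 ∧ q = 0)) := by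
  obtain hY₃ | hY₂ := le_or_gt 3 Y.ncard
  · have hne {i j : Fin 4} : Y ≠ {i, j} := by
      rintro rfl
      have := ncard_insert_le i {j}
      rw [ncard_singleton] at this
      omega
    simp only [hne, false_imp_iff, and_true]
    exact ⟨by rintro h rfl; exact not_linearIndepOn_quadPoints h,
      linearIndepOn_quadPoints hμν (hqv hY₃)⟩
  have hY_univ : Y ≠ Set.univ := fun h ↦ by
    rw [h, ncard_univ, Nat.card_fin] at hY₂
    omega
  obtain hY₁ | hY₂ : Y.ncard = 1 ∨ Y.ncard = 2 := by
    have := hY.ncard_pos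
    omega
  · obtain ⟨i, rfl⟩ := ncard_eq_one.1 hY₁
    have hne {j k : Fin 4} (hjk : j ≠ k) : {i} ≠ ({j, k} : Set (Fin 4)) := fun h ↦ by
      rw [h, ncard_pair hjk] at hY₁
      omega
    simp [hY_univ, hne]
  · obtain ⟨i, j, hij, rfl⟩ : ∃ i j : Fin 4, i < j ∧ Y = {i, j} := by
      obtain ⟨i, j, hij, rfl⟩ := ncard_eq_two.1 hY₂
      exact hij.lt_or_gt.elim (⟨i, j, ·, rfl⟩) (⟨j, i, ·, pair_comm i j⟩)
    have pair_eq_iff {k l : Fin 4} (hkl : k < l) :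
        ({i, j} : Set (Fin 4)) = {k, l} ↔ i = k ∧ j = l := by
      rw [pair_eq_pair_iff]
      omega
    rw [linearIndepOn_prodMk_one_pair hij.ne, Ne, quadPoints_eq_iff hμ hν hμν (hv hY₂.ge) hij,
      pair_eq_iff (by decide), pair_eq_iff (by decide)]
    tauto

lemma linearIndepOn_liftFamily_quadPoints_iff [Finite ι] [FiniteDimensional K V] {ν μ : K} {q v : V}
    (hμ : μ ≠ 0) (hν : ν ≠ 1) (hμν : μ ≠ ν) {X : Set ι} {Y : Set (Fin 4)}
    (hX : LinearIndepOn K ψ X) (hXY : X.ncard + Y.ncard = finrank K V + 1)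
    (hq : X.ncard + 1 < finrank K V → q ∉ span K (ψ '' X))
    (hv : span K (ψ '' X) ≠ ⊤ → ∀ r ∈ quadRatios ν μ, v - r • q ∉ span K (ψ '' X))
    (hqv : span K (ψ '' X) ⊔ span K {q} ≠ ⊤ → v ∉ span K (ψ '' X) ⊔ span K {q}) :
    LinearIndepOn K (liftFamily K ψ (quadPoints ν μ q v)) (X ⊎ Y) ↔ Y ≠ univ ∧
      (Y = {0, 1} → ¬ (ν = 0 ∧ q ∈ span K (ψ '' X))) ∧
      (Y = {2, 3} → ¬ (μ = 1 ∧ q ∈ span K (ψ '' X))) := by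
  have hXfin := finrank_span_image_eq_ncard hX X.toFinite
  have hY : Y.Nonempty := by
    by_contra! rfl
    have := Submodule.finrank_le (span K (ψ '' X))
    rw [ncard_empty] at hXY
    omega
  simp only [linearIndepOn_liftFamily_iff, and_iff_right hX, map_quadPoints]
  rw [linearIndepOn_quadPoints_iff hμ hν hμν hY]
  · simp
  · intro hY₂ r hr h
    rw [← map_smul, ← sub_eq_zero, ← map_sub, Submodule.mkQ_apply, Submodule.Quotient.mk_eq_zero]
      at h
    exact hv (span_image_ne_top hX X.toFinite (by omega)) r hr h
  · intro hY₃
    have hne_top : span K (ψ '' X) ⊔ span K {q} ≠ ⊤ := fun h ↦ by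
      have := Submodule.finrank_add_le_finrank_add_finrank (span K (ψ '' X)) (span K {q})
      have hspan_q : finrank K (span K {q}) ≤ 1 := by simpa using finrank_span_le_card (R := K) {q}
      rw [h, finrank_top] at this
      omega
    rw [LinearIndependent.pair_iff' (by simpa using hq (by omega))]
    intro a ha
    rw [← map_smul, ← sub_eq_zero, ← map_sub, Submodule.mkQ_apply, Submodule.Quotient.mk_eq_zero]
      at ha
    exact hqv hne_top <| Submodule.mem_sup.2
      ⟨_, neg_mem ha, _, Submodule.smul_mem _ a (Submodule.mem_span_singleton_self q), by abel⟩

end QuadPoints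

namespace Matroid

section Representation

variable {α : Type u} {𝔽 : Type v} [Field 𝔽] {M N : Matroid α}

lemma isRepOver_of_indep_iff {V : Type*} [AddCommGroup V] [Module 𝔽 V] (φ : α → V)
    (hφ : ∀ I, M.Indep I ↔ I ⊆ M.E ∧ LinearIndepOn 𝔽 φ I) : M.IsRepOver 𝔽 := by
  let f := Finsupp.linearCombination 𝔽 φ
  refine ⟨(α →₀ 𝔽) ⧸ LinearMap.ker f, inferInstance, inferInstance,
    fun a ↦ (LinearMap.ker f).mkQ (Finsupp.single a 1), fun I ↦ ?_⟩
  let g := (LinearMap.ker f).liftQ f le_rfl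
  have hg : Function.Injective g := LinearMap.ker_eq_bot.1 <| Submodule.ker_liftQ_eq_bot' _ f rfl
  have hgf : (g ∘ fun a ↦ (LinearMap.ker f).mkQ (Finsupp.single a 1)) = φ := by
    ext a; simp [g, f]
  rw [hφ, ← hgf, LinearMap.linearIndepOn_iff_of_injOn g hg.injOn]
  rfl

lemma IsRepOver.delete (hM : M.IsRepOver 𝔽) (D : Set α) : (M ＼ D).IsRepOver 𝔽 := by
  obtain ⟨W, _, _, φ, hφ⟩ := hM
  refine isRepOver_of_indep_iff φ fun I ↦ ?_
  rw [delete_indep_iff, hφ, delete_ground, subset_sdiff, and_right_comm]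
  rfl

lemma IsRepOver.contract (hM : M.IsRepOver 𝔽) (C : Set α) : (M ／ C).IsRepOver 𝔽 := by
  obtain ⟨W, _, _, φ, hφ : ∀ I, _ ↔ _ ∧ LinearIndepOn 𝔽 φ I⟩ := hM
  obtain ⟨J, hJ⟩ := M.exists_isBasis' C
  obtain ⟨hJE, hJφ⟩ := (hφ J).1 hJ.indep
  refine isRepOver_of_indep_iff ((span 𝔽 (φ '' J)).mkQ ∘ φ) fun I ↦ ?_
  rw [hJ.contract_indep_iff, contract_ground, subset_sdiff, hφ, union_subset_iff,
    and_iff_left hJE, disjoint_comm, and_right_comm]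
  refine and_congr_right fun ⟨_, hIC⟩ ↦ ?_
  rw [union_comm, linearIndepOn_union_iff_of_span_eq_ker (hIC.symm.mono_left hJ.subset)
    (Submodule.ker_mkQ _).symm, and_iff_right hJφ]

lemma IsProperMinorOf.isRepOver (hNM : N.IsProperMinorOf M)
    (hdelete : ∀ e ∈ M.E, (M ＼ {e}).IsRepOver 𝔽) (hcontract : ∀ e ∈ M.E, (M ／ {e}).IsRepOver 𝔽) :
    N.IsRepOver 𝔽 := by
  obtain ⟨C, D, hC, hD, hCD, ⟨e, he⟩, rfl⟩ := hNM
  change (M ／ C ＼ D).IsRepOver 𝔽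
  obtain he | he := he
  · rw [← insert_eq_of_mem he, ← singleton_union, ← contract_contract]
    exact ((hcontract e (hC he)).contract C).delete D
  · rw [contract_delete_comm _ hCD, ← insert_eq_of_mem he, ← singleton_union, ← delete_delete]
    exact ((hdelete e (hD he)).delete D).contract C

end Representation

section LinearMatroid

variable {α 𝔽 V : Type*} [Field 𝔽] [AddCommGroup V] [Module 𝔽 V]

variable (𝔽) in
/-- The matroid of linear dependence of a family `φ` of vectors, on the whole index type. -/
def linearMatroid (φ : α → V) : Matroid α :=
  (IndepMatroid.ofFinitaryCardAugment univ (LinearIndepOn 𝔽 φ)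
    (linearIndepOn_empty 𝔽 φ) (fun _ _ hJ hIJ ↦ hJ.mono hIJ)
    (by
      intro I J hI hIfin hJ hJfin hcard
      by_contra! hmax
      have hspan : span 𝔽 (φ '' J) ≤ span 𝔽 (φ '' I) := by
        rw [Submodule.span_le, image_subset_iff]
        intro e heJ
        by_cases heI : e ∈ I
        · exact Submodule.subset_span (mem_image_of_mem φ heI)
        · by_contra he
          exact hmax e heJ heI (hI.insert he)
      have := FiniteDimensional.span_of_finite 𝔽 (hIfin.image φ)
      have := Submodule.finrank_mono hspan
      rw [finrank_span_image_eq_ncard hI hIfin, finrank_span_image_eq_ncard hJ hJfin] at this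
      omega)
    (fun I ↦ linearIndepOn_of_finite I) (fun I _ ↦ subset_univ I)).matroid

@[simp] lemma linearMatroid_ground (φ : α → V) : (linearMatroid 𝔽 φ).E = univ := rfl

@[simp] lemma linearMatroid_indep_iff {φ : α → V} {I : Set α} :
    (linearMatroid 𝔽 φ).Indep I ↔ LinearIndepOn 𝔽 φ I := Iff.rfl

lemma linearMatroid_isRepOver {α : Type u} {𝔽 : Type v} [Field 𝔽] [Module 𝔽 V] (φ : α → V) :
    (linearMatroid 𝔽 φ).IsRepOver 𝔽 :=
  isRepOver_of_indep_iff φ <| by simp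

lemma linearMatroid_isBase_iff [Finite α] [FiniteDimensional 𝔽 V] {φ : α → V} {T : Set α}
    (hT : LinearIndepOn 𝔽 φ T) (hTcard : T.ncard = finrank 𝔽 V) {S : Set α} :
    (linearMatroid 𝔽 φ).IsBase S ↔ LinearIndepOn 𝔽 φ S ∧ S.ncard = finrank 𝔽 V := by
  have isBase_of_card {S : Set α} (hS : LinearIndepOn 𝔽 φ S) (hcard : S.ncard = finrank 𝔽 V) :
      (linearMatroid 𝔽 φ).IsBase S := by
    refine isBase_iff_maximal_indep.2 ⟨hS, fun I hI hSI ↦ ?_⟩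
    refine (eq_of_subset_of_ncard_le hSI ?_).ge
    rw [hcard, ← finrank_span_image_eq_ncard (linearMatroid_indep_iff.1 hI) I.toFinite]
    exact Submodule.finrank_le _
  refine ⟨fun hS ↦ ⟨hS.indep, ?_⟩, fun ⟨hS, hcard⟩ ↦ isBase_of_card hS hcard⟩
  rw [hS.ncard_eq_ncard_of_isBase (isBase_of_card hT hTcard), hTcard]

end LinearMatroid

section Rank

variable {α : Type*} {M : Matroid α} [M.RankFinite] {X I : Set α}

lemma rnk_eq_ncard_of_isBasis' (hI : M.IsBasis' I X) : M.rnk X = I.ncard := by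
  refine (IsGreatest.csSup_eq ⟨⟨I, hI.indep, hI.subset, rfl⟩, ?_⟩)
  rintro _ ⟨J, hJ, hJX, rfl⟩
  have hle := hJ.encard_le_eRk_of_subset hJX
  rwa [← hI.encard_eq_eRk, ← hJ.finite.cast_ncard_eq, ← hI.indep.finite.cast_ncard_eq,
    Nat.cast_le] at hle

lemma ncard_le_rnk_of_indep (hI : M.Indep I) (hIX : I ⊆ X) : I.ncard ≤ M.rnk X := by
  obtain ⟨J, hJ, hIJ⟩ := hI.subset_isBasis'_of_subset hIX
  exact rnk_eq_ncard_of_isBasis' hJ ▸ ncard_le_ncard hIJ hJ.indep.finite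

lemma rnk_lt_ncard_of_not_indep (hX : X.Finite) (h : ¬ M.Indep X) : M.rnk X < X.ncard := by
  obtain ⟨I, hI⟩ := M.exists_isBasis' X
  exact rnk_eq_ncard_of_isBasis' hI ▸
    ncard_lt_ncard (hI.subset.ssubset_of_ne fun hIX ↦ h (hIX ▸ hI.indep)) hX

lemma rnk_lt_ncard_of_forall_not_isBase {B : Set α} (hB : M.IsBase B)
    (h : ∀ S ⊆ X, ¬ M.IsBase S) : M.rnk X < B.ncard := by
  obtain ⟨I, hI⟩ := M.exists_isBasis' X
  obtain ⟨B', hB', hIB'⟩ := hI.indep.exists_isBase_superset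
  rw [rnk_eq_ncard_of_isBasis' hI, hB.ncard_eq_ncard_of_isBase hB']
  exact ncard_lt_ncard (hIB'.ssubset_of_ne fun hIB ↦ h I hI.subset (hIB ▸ hB')) hB'.finite

end Rank

section Ingleton

variable {α : Type u} {𝔽 : Type v} [Field 𝔽] {M : Matroid α} {W : Type*} [AddCommGroup W]
  [Module 𝔽 W] {φ : α → W} {I X : Set α}

lemma span_image_eq_of_isBasis' (hφ : ∀ I, M.Indep I ↔ I ⊆ M.E ∧ LinearIndepOn 𝔽 φ I)
    (hI : M.IsBasis' I X) : span 𝔽 (φ '' I) = span 𝔽 (φ '' (X ∩ M.E)) := by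
  refine Submodule.span_eq_span ?_ ?_
  · exact (image_mono (subset_inter hI.subset hI.indep.subset_ground)).trans
      Submodule.subset_span
  · rintro _ ⟨x, ⟨hxX, hxE⟩, rfl⟩
    by_contra hx
    have hins : M.Indep (insert x I) :=
      (hφ _).2 ⟨insert_subset hxE hI.indep.subset_ground, ((hφ I).1 hI.indep).2.insert hx⟩
    exact hx (Submodule.subset_span (mem_image_of_mem φ (hI.mem_of_insert_indep hxX hins)))

lemma IsRepOver.ingletonIneq [M.RankFinite] (hM : M.IsRepOver 𝔽) (X₁ X₂ X₃ X₄ : Set α) :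
    M.IngletonIneq X₁ X₂ X₃ X₄ := by
  obtain ⟨W, _, _, φ, hφ : ∀ I, _ ↔ _ ∧ LinearIndepOn 𝔽 φ I⟩ := hM
  let U (X : Set α) := span 𝔽 (φ '' (X ∩ M.E))
  have span_eq {I X : Set α} (hI : M.IsBasis' I X) : span 𝔽 (φ '' I) = U X :=
    span_image_eq_of_isBasis' hφ hI
  have finite_U (X : Set α) : FiniteDimensional 𝔽 (U X) := by
    obtain ⟨I, hI⟩ := M.exists_isBasis' X
    exact span_eq hI ▸ FiniteDimensional.span_of_finite 𝔽 (hI.indep.finite.image φ)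
  have rnk_eq (X : Set α) : M.rnk X = finrank 𝔽 (U X) := by
    obtain ⟨I, hI⟩ := M.exists_isBasis' X
    rw [rnk_eq_ncard_of_isBasis' hI, ← span_eq hI,
      finrank_span_image_eq_ncard ((hφ I).1 hI.indep).2 hI.indep.finite]
  have U_union (X Y : Set α) : U (X ∪ Y) = U X ⊔ U Y := by
    simp only [U, Set.union_inter_distrib_right, Set.image_union, Submodule.span_union]
  have ingleton := finrank_ingleton_le (U X₁) (U X₂) (U X₃) (U X₄)
  repeat rw [← U_union] at ingleton
  simpa only [IngletonIneq, rnk_eq] using ingleton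

end Ingleton

section Bases

variable {α : Type*} {M N : Matroid α}

lemma exists_relaxation [M.Finite] {H : Set α} (hHE : H ⊆ M.E)
    (hcard : ∀ B, M.IsBase B → B.ncard = H.ncard)
    (hexchange : ∀ x ∈ H, ∀ y ∈ M.E \ H, M.IsBase (insert y (H \ {x}))) :
    ∃ M' : Matroid α, M'.E = M.E ∧ ∀ B, M'.IsBase B ↔ M.IsBase B ∨ B = H := by
  have exists_mem_sdiff {S T : Set α} {x : α} (hS : S ⊆ M.E) (hST : S.ncard = T.ncard)
      (hx : x ∈ S \ T) : (T \ S).Nonempty := by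
    refine sdiff_nonempty.2 fun hTS ↦ hx.2 ?_
    exact (eq_of_subset_of_ncard_le hTS hST.le (M.set_finite S)).ge hx.1
  refine ⟨Matroid.ofIsBaseOfFinite M.ground_finite (fun B ↦ M.IsBase B ∨ B = H) ?_ ?_ ?_,
    rfl, fun B ↦ Iff.rfl⟩
  · exact M.exists_isBase.imp fun _ ↦ Or.inl
  · rintro S T (hS | rfl) (hT | rfl) x hx
    · obtain ⟨y, hy, h⟩ := hS.exchange hT hx
      exact ⟨y, hy, .inl h⟩
    · obtain hST | ⟨z, hzS, hzT⟩ : (S \ {x} ⊆ T) ∨ ((S \ {x}) \ T).Nonempty := by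
        rw [sdiff_nonempty]; exact em _
      · obtain ⟨y, hy⟩ := exists_mem_sdiff hS.subset_ground (hcard S hS) hx
        refine ⟨y, hy, .inr <| eq_of_subset_of_ncard_le (insert_subset hy.1 hST) ?_
          (M.set_finite _ hHE)⟩
        rw [ncard_exchange hy.2 hx.1, hcard S hS]
      · obtain ⟨w, hw⟩ := exists_mem_sdiff hS.subset_ground (hcard S hS) hx
        have hB := hexchange w hw.1 z ⟨hS.subset_ground hzS.1, hzT⟩
        have hxB : x ∉ insert z (T \ {w}) := by
          rintro (rfl | h)
          exacts [hzS.2 rfl, hx.2 h.1]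
        obtain ⟨y, ⟨rfl | hyT, hyS⟩, h⟩ := hS.exchange hB ⟨hx.1, hxB⟩
        exacts [absurd hzS.1 hyS, ⟨y, ⟨hyT.1, hyS⟩, .inl h⟩]
    · obtain ⟨y, hy⟩ := exists_mem_sdiff hHE (hcard T hT).symm hx
      exact ⟨y, hy, .inl <| hexchange x hx.1 y ⟨hT.subset_ground hy.1, hy.2⟩⟩
    · exact absurd hx.1 hx.2
  · rintro B (hB | rfl)
    exacts [hB.subset_ground, hHE]

lemma delete_eq_of_isBase_iff (hE : M.E = N.E) {D : Set α} (hD : M.Coindep D)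
    (h : ∀ B, Disjoint B D → (M.IsBase B ↔ N.IsBase B)) : M ＼ D = N ＼ D := by
  obtain ⟨B, hB, hBD⟩ := (coindep_iff_exists'.1 hD).1
  have hD' : N.Coindep D := by
    refine (coindep_iff_exists (by rw [← hE]; exact hD.subset_ground)).2 ⟨B, ?_, hE ▸ hBD⟩
    exact (h B (subset_sdiff.1 hBD).2).1 hB
  refine ext_isBase (by simp [hE]) fun S _ ↦ ?_
  rw [hD.delete_isBase_iff, hD'.delete_isBase_iff]
  exact and_congr_left fun hSD ↦ h S hSD

lemma contract_eq_of_isBase_iff (hE : M.E = N.E) {C : Set α} (hC : M.Indep C)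
    (h : ∀ B, C ⊆ B → (M.IsBase B ↔ N.IsBase B)) : M ／ C = N ／ C := by
  obtain ⟨B, hB, hCB⟩ := hC.exists_isBase_superset
  have hC' : N.Indep C := ((h B hCB).1 hB).indep.subset hCB
  refine ext_isBase (by simp [hE]) fun S _ ↦ ?_
  rw [hC.contract_isBase_iff, hC'.contract_isBase_iff, h _ subset_union_right]

end Bases

section HyperplanePair

variable {ι : Type u} {K : Type v} {V : Type*} [Field K] [AddCommGroup V] [Module K V] {ψ : ι → V}
  {A B X : Set ι}

/-- The indices of the family `ψ` split into two bases `A` and `B` of distinct hyperplanes, and no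
vector of the family lies on both hyperplanes. -/
structure IsHyperplanePair (K : Type*) [Field K] [Module K V] (ψ : ι → V) (A B : Set ι) :
    Prop where
  isCompl : IsCompl A B
  linearIndepOn_left : LinearIndepOn K ψ A
  linearIndepOn_right : LinearIndepOn K ψ B
  ncard_left : A.ncard + 1 = finrank K V
  ncard_right : B.ncard + 1 = finrank K V
  two_le_ncard : 2 ≤ A.ncard
  notMem_span_left : ∀ b ∈ B, ψ b ∉ span K (ψ '' A)
  notMem_span_right : ∀ a ∈ A, ψ a ∉ span K (ψ '' B)

namespace IsHyperplanePair

lemma symm (h : IsHyperplanePair K ψ A B) : IsHyperplanePair K ψ B A where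
  isCompl := h.isCompl.symm
  linearIndepOn_left := h.linearIndepOn_right
  linearIndepOn_right := h.linearIndepOn_left
  ncard_left := h.ncard_right
  ncard_right := h.ncard_left
  two_le_ncard := by linarith [h.two_le_ncard, h.ncard_left, h.ncard_right]
  notMem_span_left := h.notMem_span_right
  notMem_span_right := h.notMem_span_left

lemma nonempty_left (h : IsHyperplanePair K ψ A B) : A.Nonempty :=
  nonempty_of_ncard_ne_zero (by linarith [h.two_le_ncard])

lemma linearIndepOn_insert_left (h : IsHyperplanePair K ψ A B) {b : ι} (hb : b ∈ B) :
    LinearIndepOn K ψ (insert b A) :=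
  h.linearIndepOn_left.insert (h.notMem_span_left b hb)

lemma not_span_left_le_span_right (h : IsHyperplanePair K ψ A B) :
    ¬ span K (ψ '' A) ≤ span K (ψ '' B) := fun hAB ↦ by
  obtain ⟨a, ha⟩ := h.nonempty_left
  exact h.notMem_span_right a ha (hAB (Submodule.subset_span (mem_image_of_mem ψ ha)))

variable [Finite ι]

lemma ncard_insert_left (h : IsHyperplanePair K ψ A B) {b : ι} (hb : b ∈ B) :
    (insert b A).ncard = finrank K V := by
  rw [ncard_insert_of_notMem (h.isCompl.symm.disjoint.notMem_of_mem_left hb), h.ncard_left]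

variable [FiniteDimensional K V]

lemma isCoatom_span_left (h : IsHyperplanePair K ψ A B) : IsCoatom (span K (ψ '' A)) := by
  have hcard := finrank_span_image_eq_ncard h.linearIndepOn_left A.toFinite
  have := h.ncard_left
  refine ⟨span_image_ne_top h.linearIndepOn_left A.toFinite (by omega), fun P hP ↦ ?_⟩
  have := Submodule.finrank_lt_finrank_of_lt hP
  have := P.finrank_le
  exact Submodule.eq_top_of_finrank_eq (by omega)

lemma span_left_le_iff (h : IsHyperplanePair K ψ A B) (hX : LinearIndepOn K ψ X)
    (hcard : X.ncard < finrank K V) : span K (ψ '' A) ≤ span K (ψ '' X) ↔ X = A := by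
  refine ⟨fun hAX ↦ ?_, by rintro rfl; rfl⟩
  have hXA : span K (ψ '' X) = span K (ψ '' A) :=
    ((h.isCoatom_span_left.le_iff).1 hAX).resolve_left
      (span_image_ne_top hX X.toFinite hcard.ne)
  have hsub : X ⊆ A := fun x hx ↦ by
    by_contra hxA
    refine h.notMem_span_left x (h.isCompl.compl_eq ▸ hxA) ?_
    exact hXA ▸ Submodule.subset_span (mem_image_of_mem ψ hx)
  refine eq_of_subset_of_ncard_le hsub ?_
  rw [← finrank_span_image_eq_ncard hX X.toFinite, hXA,
    finrank_span_image_eq_ncard h.linearIndepOn_left A.toFinite]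

lemma subset_right_of_inf_le (h : IsHyperplanePair K ψ A B)
    (hX : span K (ψ '' A) ⊓ span K (ψ '' B) ≤ span K (ψ '' X))
    (hAX : ¬ span K (ψ '' A) ≤ span K (ψ '' X)) : X ⊆ B := by
  have hinf := inf_eq_inf_of_isCoatom h.symm.isCoatom_span_left h.not_span_left_le_span_right hX hAX
  rw [← h.isCompl.compl_eq]
  intro x hxX hxA
  have hx {Y : Set ι} (hxY : x ∈ Y) : ψ x ∈ span K (ψ '' Y) :=
    Submodule.subset_span (mem_image_of_mem ψ hxY)
  exact h.notMem_span_right x hxA (hinf.le ⟨hx hxA, hx hxX⟩).2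

lemma inf_ne_bot (h : IsHyperplanePair K ψ A B) : span K (ψ '' A) ⊓ span K (ψ '' B) ≠ ⊥ := by
  intro hbot
  have hdim := Submodule.finrank_sup_add_finrank_inf_eq (span K (ψ '' A)) (span K (ψ '' B))
  rw [hbot, finrank_bot, finrank_span_image_eq_ncard h.linearIndepOn_left A.toFinite,
    finrank_span_image_eq_ncard h.linearIndepOn_right B.toFinite] at hdim
  have := (span K (ψ '' A) ⊔ span K (ψ '' B)).finrank_le
  linarith [h.ncard_left, h.ncard_right, h.two_le_ncard]

lemma inf_le_iff (h : IsHyperplanePair K ψ A B) (hX : LinearIndepOn K ψ X)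
    (hcard : X.ncard < finrank K V) :
    span K (ψ '' A) ⊓ span K (ψ '' B) ≤ span K (ψ '' X) ↔ X = A ∨ X = B := by
  refine ⟨fun hinf ↦ ?_, by rintro (rfl | rfl); exacts [inf_le_left, inf_le_right]⟩
  by_contra! hne
  have hXB := h.subset_right_of_inf_le hinf (mt (h.span_left_le_iff hX hcard).1 hne.1)
  have hXA := h.symm.subset_right_of_inf_le (inf_comm (span K (ψ '' A)) _ ▸ hinf)
    (mt (h.symm.span_left_le_iff hX hcard).1 hne.2)
  have hX_empty : X = ∅ := subset_empty_iff.1 (h.isCompl.disjoint hXA hXB)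
  exact h.inf_ne_bot (by simpa [hX_empty] using hinf)

end IsHyperplanePair

end HyperplanePair

section QuadMatroid

variable {ι : Type u} {K : Type v} {V : Type*} [Field K] [AddCommGroup V] [Module K V] {ψ : ι → V}

/-- The bases of the matroid obtained from `ψ` by adding the four points `0, 1, 2, 3` of a generic
plane of a space of one dimension more, where the point at infinity of the line through `0` and `1`
(resp. `2` and `3`) lies on the hyperplanes spanned by the members of `𝓟` (resp. `𝓠`). -/
def IsQuadBase (K : Type*) [Field K] [Module K V] (ψ : ι → V) (𝓟 𝓠 : Set (Set ι))
    (S : Set (ι ⊕ Fin 4)) : Prop :=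
  S.ncard = finrank K V + 1 ∧ LinearIndepOn K ψ (Sum.inl ⁻¹' S) ∧ Sum.inr ⁻¹' S ≠ univ ∧
    (Sum.inr ⁻¹' S = {0, 1} → Sum.inl ⁻¹' S ∉ 𝓟) ∧ (Sum.inr ⁻¹' S = {2, 3} → Sum.inl ⁻¹' S ∉ 𝓠)

lemma isQuadBase_sum_iff [Finite ι] {𝓟 𝓠 : Set (Set ι)} {X : Set ι} {Y : Set (Fin 4)} :
    IsQuadBase K ψ 𝓟 𝓠 (X ⊎ Y) ↔ X.ncard + Y.ncard = finrank K V + 1 ∧ LinearIndepOn K ψ X ∧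
      Y ≠ univ ∧ (Y = {0, 1} → X ∉ 𝓟) ∧ (Y = {2, 3} → X ∉ 𝓠) := by
  rw [IsQuadBase, preimage_inl_image_inl_union_image_inr, preimage_inr_image_inl_union_image_inr,
    ncard_image_inl_union_image_inr]

/-- `M` has the sets `IsQuadBase K ψ 𝓟 𝓠` as its bases. -/
structure IsQuadMatroid (K : Type*) [Field K] [Module K V] (ψ : ι → V) (𝓟 𝓠 : Set (Set ι))
    (M : Matroid (ι ⊕ Fin 4)) : Prop where
  ground_eq : M.E = univ
  isBase_iff : ∀ S, M.IsBase S ↔ IsQuadBase K ψ 𝓟 𝓠 S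

lemma exists_isRepOver_isQuadMatroid [Infinite K] [Finite ι] [FiniteDimensional K V]
    {ν μ : K} (hμ : μ ≠ 0) (hν : ν ≠ 1) (hμν : μ ≠ ν) {𝓟 𝓠 : Set (Set ι)} (U : Submodule K V)
    (hU : ∀ X, LinearIndepOn K ψ X → X.ncard + 1 < finrank K V → ¬ U ≤ span K (ψ '' X))
    (h𝓟 : ∀ X, LinearIndepOn K ψ X → X.ncard + 1 = finrank K V →
      (X ∈ 𝓟 ↔ ν = 0 ∧ U ≤ span K (ψ '' X)))
    (h𝓠 : ∀ X, LinearIndepOn K ψ X → X.ncard + 1 = finrank K V →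
      (X ∈ 𝓠 ↔ μ = 1 ∧ U ≤ span K (ψ '' X)))
    (hbase : ∃ S, IsQuadBase K ψ 𝓟 𝓠 S) :
    ∃ M : Matroid (ι ⊕ Fin 4), M.IsRepOver K ∧ IsQuadMatroid K ψ 𝓟 𝓠 M := by
  obtain ⟨q, hqU, hq⟩ := exists_mem_forall_notMem U fun X : Set ι ↦ span K (ψ '' X)
  have mem_iff (X : Set ι) : q ∈ span K (ψ '' X) ↔ U ≤ span K (ψ '' X) :=
    ⟨fun h ↦ by_contra fun hX ↦ hq X hX h, fun h ↦ h hqU⟩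
  obtain ⟨v, hv⟩ := exists_forall_notMem_span ψ q (R := quadRatios ν μ) ((toFinite _).image _)
  set φ := liftFamily K ψ (quadPoints ν μ q v)
  have isQuadBase_iff (S : Set (ι ⊕ Fin 4)) :
      IsQuadBase K ψ 𝓟 𝓠 S ↔ LinearIndepOn K φ S ∧ S.ncard = finrank K (V × K) := by
    rw [← image_preimage_inl_union_image_preimage_inr S]
    set X := Sum.inl ⁻¹' S
    set Y := Sum.inr ⁻¹' S
    rw [isQuadBase_sum_iff, ncard_image_inl_union_image_inr, finrank_prod, finrank_self,
      and_comm (b := _ = _)]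
    refine and_congr_right fun hXY ↦ ?_
    by_cases hX : LinearIndepOn K ψ X
    · rw [linearIndepOn_liftFamily_quadPoints_iff hμ hν hμν hX hXY
        (fun hX' ↦ hq X (hU X hX hX')) (hv X).1 (hv X).2, mem_iff, and_iff_right hX]
      have card {i j : Fin 4} (hij : i ≠ j) (hY : Y = {i, j}) : X.ncard + 1 = finrank K V := by
        rw [hY, ncard_pair hij] at hXY
        omega
      refine and_congr_right fun _ ↦ and_congr (forall_congr' fun hY ↦ ?_)
        (forall_congr' fun hY ↦ ?_)
      · rw [h𝓟 X hX (card (by decide) hY)]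
      · rw [h𝓠 X hX (card (by decide) hY)]
    · simp [hX, φ, linearIndepOn_liftFamily_iff]
  obtain ⟨T, hT⟩ := hbase
  obtain ⟨hTφ, hTcard⟩ := (isQuadBase_iff T).1 hT
  refine ⟨linearMatroid K φ, linearMatroid_isRepOver φ, ⟨rfl, fun S ↦ ?_⟩⟩
  rw [isQuadBase_iff, linearMatroid_isBase_iff hTφ hTcard]

end QuadMatroid

section QuadMatroidOfHyperplanePair

variable {ι : Type u} {K : Type v} {V : Type*} [Field K] [AddCommGroup V] [Module K V] {ψ : ι → V}
  {A B : Set ι} {𝓟 𝓠 𝓟' 𝓠' : Set (Set ι)} {M M' : Matroid (ι ⊕ Fin 4)}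

namespace IsHyperplanePair

lemma isQuadBase [Finite ι] (h : IsHyperplanePair K ψ A B) {Y : Set (Fin 4)} (hY : Y.ncard = 2)
    (h𝓟 : Y = {0, 1} → A ∉ 𝓟) (h𝓠 : Y = {2, 3} → A ∉ 𝓠) : IsQuadBase K ψ 𝓟 𝓠 (A ⊎ Y) := by
  refine isQuadBase_sum_iff.2 ⟨?_, h.linearIndepOn_left, ?_, h𝓟, h𝓠⟩
  · rw [hY, ← h.ncard_left]
  · rintro rfl
    simp at hY

lemma isQuadBase_union_zero_two [Finite ι] (h : IsHyperplanePair K ψ A B) :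
    IsQuadBase K ψ 𝓟 𝓠 (A ⊎ {0, 2}) :=
  h.isQuadBase (ncard_pair (by decide)) (by simp [pair_eq_pair_iff]) (by simp [pair_eq_pair_iff])

lemma isQuadBase_union_one_three [Finite ι] (h : IsHyperplanePair K ψ A B) :
    IsQuadBase K ψ 𝓟 𝓠 (B ⊎ {1, 3}) :=
  h.symm.isQuadBase (ncard_pair (by decide)) (by simp [pair_eq_pair_iff])
    (by simp [pair_eq_pair_iff])

variable [Finite ι] [FiniteDimensional K V] [Infinite K]

lemma exists_isRepOver_isQuadMatroid (h : IsHyperplanePair K ψ A B) {ν μ : K} (hμ : μ ≠ 0)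
    (hν : ν ≠ 1) (hμν : μ ≠ ν) (U : Submodule K V)
    (h𝓟 : ∀ X, LinearIndepOn K ψ X → X.ncard < finrank K V →
      (X ∈ 𝓟 ↔ ν = 0 ∧ U ≤ span K (ψ '' X)))
    (h𝓠 : ∀ X, LinearIndepOn K ψ X → X.ncard < finrank K V →
      (X ∈ 𝓠 ↔ μ = 1 ∧ U ≤ span K (ψ '' X)))
    (hU : ∀ X, LinearIndepOn K ψ X → X.ncard < finrank K V → U ≤ span K (ψ '' X) → X = A ∨ X = B) :
    ∃ M : Matroid (ι ⊕ Fin 4), M.IsRepOver K ∧ IsQuadMatroid K ψ 𝓟 𝓠 M := by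
  have card := h.ncard_left
  have card' := h.ncard_right
  exact Matroid.exists_isRepOver_isQuadMatroid hμ hν hμν U
    (fun X hX hcard hUX ↦ by obtain rfl | rfl := hU X hX (by omega) hUX <;> omega)
    (fun X hX hcard ↦ h𝓟 X hX (by omega)) (fun X hX hcard ↦ h𝓠 X hX (by omega))
    ⟨_, h.isQuadBase_union_zero_two⟩

lemma exists_isRepOver_isQuadMatroid_pair_pair (h : IsHyperplanePair K ψ A B) :
    ∃ M : Matroid (ι ⊕ Fin 4), M.IsRepOver K ∧ IsQuadMatroid K ψ {A, B} {A, B} M :=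
  h.exists_isRepOver_isQuadMatroid (ν := 0) (μ := 1) one_ne_zero zero_ne_one one_ne_zero
    (span K (ψ '' A) ⊓ span K (ψ '' B))
    (fun X hX hcard ↦ by simp [h.inf_le_iff hX hcard])
    (fun X hX hcard ↦ by simp [h.inf_le_iff hX hcard])
    (fun X hX hcard ↦ (h.inf_le_iff hX hcard).1)

lemma exists_isRepOver_isQuadMatroid_left_empty (h : IsHyperplanePair K ψ A B) :
    ∃ M : Matroid (ι ⊕ Fin 4), M.IsRepOver K ∧ IsQuadMatroid K ψ {A} ∅ M := by
  obtain ⟨t, ht⟩ := (toFinite ({0, 1} : Set K)).infinite_compl.nonempty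
  obtain ⟨ht₀, ht₁⟩ : t ≠ 0 ∧ t ≠ 1 := by simpa using ht
  exact h.exists_isRepOver_isQuadMatroid (ν := 0) (μ := t) ht₀ zero_ne_one ht₀ (span K (ψ '' A))
    (fun X hX hcard ↦ by simp [h.span_left_le_iff hX hcard])
    (fun _ _ _ ↦ by simp [ht₁])
    (fun X hX hcard ↦ .inl ∘ (h.span_left_le_iff hX hcard).1)

lemma exists_isRepOver_isQuadMatroid_empty_left (h : IsHyperplanePair K ψ A B) :
    ∃ M : Matroid (ι ⊕ Fin 4), M.IsRepOver K ∧ IsQuadMatroid K ψ ∅ {A} M := by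
  obtain ⟨t, ht⟩ := (toFinite ({0, 1} : Set K)).infinite_compl.nonempty
  obtain ⟨ht₀, ht₁⟩ : t ≠ 0 ∧ t ≠ 1 := by simpa using ht
  exact h.exists_isRepOver_isQuadMatroid (ν := t) (μ := 1) one_ne_zero ht₁ ht₁.symm
    (span K (ψ '' A))
    (fun _ _ _ ↦ by simp [ht₀])
    (fun X hX hcard ↦ by simp [h.span_left_le_iff hX hcard])
    (fun X hX hcard ↦ .inl ∘ (h.span_left_le_iff hX hcard).1)

end IsHyperplanePair

lemma isQuadBase_congr {S : Set (ι ⊕ Fin 4)}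
    (h𝓟 : Sum.inr ⁻¹' S = {0, 1} → (Sum.inl ⁻¹' S ∈ 𝓟 ↔ Sum.inl ⁻¹' S ∈ 𝓟'))
    (h𝓠 : Sum.inr ⁻¹' S = {2, 3} → (Sum.inl ⁻¹' S ∈ 𝓠 ↔ Sum.inl ⁻¹' S ∈ 𝓠')) :
    IsQuadBase K ψ 𝓟 𝓠 S ↔ IsQuadBase K ψ 𝓟' 𝓠' S := by
  unfold IsQuadBase
  refine and_congr_right' <| and_congr_right' <| and_congr_right' <| and_congr ?_ ?_
  · exact forall_congr' fun h ↦ not_congr (h𝓟 h)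
  · exact forall_congr' fun h ↦ not_congr (h𝓠 h)

/-- Hence `B ⊎ {2, 3}` is a circuit-hyperplane of the matroid with these bases. -/
lemma IsHyperplanePair.isQuadBase_insert_diff [Finite ι] (h : IsHyperplanePair K ψ A B)
    {x y : ι ⊕ Fin 4} (hx : x ∈ Sum.inl '' B ∪ Sum.inr '' {2, 3})
    (hy : y ∉ Sum.inl '' B ∪ Sum.inr '' {2, 3}) :
    IsQuadBase K ψ {A, B} {A, B} (insert y ((B ⊎ {2, 3}) \ {x})) := by
  set H : Set (ι ⊕ Fin 4) := B ⊎ {2, 3} with hH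
  set T := insert y (H \ {x})
  have eq_y {z : ι ⊕ Fin 4} (hzT : z ∈ T) (hzH : z ∉ H) : z = y :=
    hzT.resolve_right fun hz ↦ hzH hz.1
  have pair_not_subset {a b : ι ⊕ Fin 4} (hab : a ≠ b) (ha : a ∉ H) (hb : b ∉ H) : ¬ {a, b} ⊆ T :=
    fun h ↦ hab <| (eq_y (h (mem_insert a {b})) ha).trans
      (eq_y (h (mem_insert_of_mem a (mem_singleton b))) hb).symm
  have not_subset_inr : ¬ {0, 1} ⊆ Sum.inr ⁻¹' T := fun h ↦
    pair_not_subset (a := .inr 0) (b := .inr 1) (by simp) (by simp [hH]) (by simp [hH])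
      (by simpa [insert_subset_iff] using h)
  refine ⟨?_, ?_, ?_, fun hY ↦ absurd hY.ge not_subset_inr, fun hY hX ↦ ?_⟩
  · rw [ncard_exchange hy hx, ncard_image_inl_union_image_inr, ncard_pair (by decide),
      ← h.ncard_right]
  · by_cases hTB : Sum.inl ⁻¹' T ⊆ B
    · exact h.linearIndepOn_right.mono hTB
    · obtain ⟨a, haT, haB⟩ := Set.not_subset.1 hTB
      refine (h.linearIndepOn_right.insert
        (h.notMem_span_right a (h.isCompl.symm.compl_eq ▸ haB))).mono fun k hk ↦ ?_
      by_contra! hka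
      exact hka (.inl <| Sum.inl_injective <|
        (eq_y hk (by simpa [hH] using fun hkB ↦ hka (.inr hkB))).trans
          (eq_y haT (by simpa [hH] using haB)).symm)
  · exact fun hY ↦ not_subset_inr (hY ▸ subset_univ _)
  · rcases hX with hX | hX
    · obtain ⟨a, ha, b, hb, hab⟩ := (one_lt_ncard (toFinite A)).1 h.two_le_ncard
      have notMem {j : ι} (hj : j ∈ A) : Sum.inl j ∉ H := by
        simpa [hH] using h.isCompl.disjoint.notMem_of_mem_left hj
      refine pair_not_subset (Sum.inl_injective.ne hab) (notMem ha) (notMem hb) ?_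
      exact pair_subset (hX.ge ha) (hX.ge hb)
    · have hTH : T = H := by rw [← image_preimage_inl_union_image_preimage_inr T, hX, hY]
      exact hy (hTH ▸ mem_insert y _)

lemma IsHyperplanePair.exists_isQuadMatroid_relaxation [Finite ι] (h : IsHyperplanePair K ψ A B)
    (hM : IsQuadMatroid K ψ {A, B} {A, B} M) :
    ∃ M' : Matroid (ι ⊕ Fin 4), IsQuadMatroid K ψ {A, B} {A} M' := by
  have : M.Finite := ⟨toFinite _⟩
  have hcard : (B ⊎ {2, 3} : Set (ι ⊕ Fin 4)).ncard = finrank K V + 1 := by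
    rw [ncard_image_inl_union_image_inr, ncard_pair (by decide), ← h.ncard_right]
  obtain ⟨M', hM'E, hM'⟩ := M.exists_relaxation (H := B ⊎ {2, 3}) (by simp [hM.ground_eq])
    (fun S hS ↦ by rw [hcard, ((hM.isBase_iff S).1 hS).1])
    (fun x hx y hy ↦ (hM.isBase_iff _).2 (h.isQuadBase_insert_diff hx hy.2))
  refine ⟨M', hM'E.trans hM.ground_eq, fun S ↦ ?_⟩
  rw [hM', hM.isBase_iff]
  by_cases hS : S = B ⊎ {2, 3}
  · have hBA : B ≠ A := h.isCompl.disjoint.symm.ne h.symm.nonempty_left.ne_empty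
    simp only [hS, or_true, true_iff]
    exact h.symm.isQuadBase (ncard_pair (by decide)) (by simp [pair_eq_pair_iff]) (by simp [hBA])
  · rw [or_iff_left hS]
    refine isQuadBase_congr (fun _ ↦ Iff.rfl) fun hY ↦ or_iff_left ?_
    rintro (hX : Sum.inl ⁻¹' S = B)
    exact hS (by rw [← hX, ← hY, image_preimage_inl_union_image_preimage_inr])

lemma IsHyperplanePair.compl_union_zero_two (h : IsHyperplanePair K ψ A B) :
    (A ⊎ {0, 2} : Set (ι ⊕ Fin 4))ᶜ = B ⊎ {1, 3} := by
  ext (j | i)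
  · simp [← h.isCompl.compl_eq]
  · fin_cases i <;> simp

namespace IsQuadMatroid

lemma indep_singleton [Finite ι] (hM : IsQuadMatroid K ψ 𝓟 𝓠 M) (h : IsHyperplanePair K ψ A B)
    (e : ι ⊕ Fin 4) : M.Indep {e} := by
  by_cases he : e ∈ (A ⊎ {0, 2} : Set (ι ⊕ Fin 4))
  · exact ((hM.isBase_iff _).2 h.isQuadBase_union_zero_two).indep.subset (by simpa using he)
  · rw [← mem_compl_iff, h.compl_union_zero_two] at he
    exact ((hM.isBase_iff _).2 h.isQuadBase_union_one_three).indep.subset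
      (singleton_subset_iff.2 he)

lemma coindep_singleton [Finite ι] (hM : IsQuadMatroid K ψ 𝓟 𝓠 M) (h : IsHyperplanePair K ψ A B)
    (e : ι ⊕ Fin 4) : M.Coindep {e} := by
  rw [coindep_iff_exists (by simp [hM.ground_eq]), hM.ground_eq, ← compl_eq_univ_sdiff]
  simp only [subset_compl_singleton_iff]
  by_cases he : e ∈ (A ⊎ {0, 2} : Set (ι ⊕ Fin 4))
  · refine ⟨_, (hM.isBase_iff _).2 h.isQuadBase_union_one_three, ?_⟩
    rwa [← h.compl_union_zero_two, notMem_compl_iff]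
  · exact ⟨_, (hM.isBase_iff _).2 h.isQuadBase_union_zero_two, he⟩

lemma delete_eq (hM : IsQuadMatroid K ψ 𝓟 𝓠 M) (hM' : IsQuadMatroid K ψ 𝓟' 𝓠' M') {e : ι ⊕ Fin 4}
    (he : M.Coindep {e})
    (h𝓟 : ∀ X, e ∉ Sum.inl '' X ∪ Sum.inr '' {0, 1} → (X ∈ 𝓟 ↔ X ∈ 𝓟'))
    (h𝓠 : ∀ X, e ∉ Sum.inl '' X ∪ Sum.inr '' {2, 3} → (X ∈ 𝓠 ↔ X ∈ 𝓠')) : M ＼ {e} = M' ＼ {e} := by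
  refine delete_eq_of_isBase_iff (hM.ground_eq.trans hM'.ground_eq.symm) he fun S hS ↦ ?_
  rw [hM.isBase_iff, hM'.isBase_iff]
  have heS : e ∉ S := disjoint_singleton_right.1 hS
  refine isQuadBase_congr (fun hY ↦ h𝓟 _ ?_) (fun hY ↦ h𝓠 _ ?_) <;>
    rwa [← hY, image_preimage_inl_union_image_preimage_inr]

lemma contract_eq (hM : IsQuadMatroid K ψ 𝓟 𝓠 M) (hM' : IsQuadMatroid K ψ 𝓟' 𝓠' M')
    {e : ι ⊕ Fin 4} (he : M.Indep {e})
    (h𝓟 : ∀ X, e ∈ Sum.inl '' X ∪ Sum.inr '' {0, 1} → (X ∈ 𝓟 ↔ X ∈ 𝓟'))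
    (h𝓠 : ∀ X, e ∈ Sum.inl '' X ∪ Sum.inr '' {2, 3} → (X ∈ 𝓠 ↔ X ∈ 𝓠')) : M ／ {e} = M' ／ {e} := by
  refine contract_eq_of_isBase_iff (hM.ground_eq.trans hM'.ground_eq.symm) he fun S hS ↦ ?_
  rw [hM.isBase_iff, hM'.isBase_iff]
  have heS : e ∈ S := singleton_subset_iff.1 hS
  refine isQuadBase_congr (fun hY ↦ h𝓟 _ ?_) (fun hY ↦ h𝓠 _ ?_) <;>
    rwa [← hY, image_preimage_inl_union_image_preimage_inr]

section Minors

variable [Finite ι] [FiniteDimensional K V] [Infinite K]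

lemma isRepOver_delete (hM : IsQuadMatroid K ψ {A, B} {A} M) (h : IsHyperplanePair K ψ A B)
    (e : ι ⊕ Fin 4) : (M ＼ {e}).IsRepOver K := by
  have isRepOver_of {𝓟 𝓠 : Set (Set ι)}
      (hM' : ∃ M' : Matroid (ι ⊕ Fin 4), M'.IsRepOver K ∧ IsQuadMatroid K ψ 𝓟 𝓠 M')
      (h𝓟 : ∀ X, e ∉ X ⊎ {0, 1} → (X = A ∨ X = B ↔ X ∈ 𝓟))
      (h𝓠 : ∀ X, e ∉ X ⊎ {2, 3} → (X = A ↔ X ∈ 𝓠)) : (M ＼ {e}).IsRepOver K := by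
    obtain ⟨M', hM'rep, hM'⟩ := hM'
    exact hM.delete_eq hM' (hM.coindep_singleton h e) h𝓟 h𝓠 ▸ hM'rep.delete {e}
  rcases e with j | i
  · by_cases hj : j ∈ A
    · exact isRepOver_of h.symm.exists_isRepOver_isQuadMatroid_left_empty (by aesop) (by aesop)
    · replace hj : j ∈ B := h.isCompl.compl_eq ▸ hj
      exact isRepOver_of h.exists_isRepOver_isQuadMatroid_pair_pair (by aesop) (by aesop)
  · by_cases hi : i = 0 ∨ i = 1
    · exact isRepOver_of h.exists_isRepOver_isQuadMatroid_empty_left (by aesop) (by aesop)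
    · replace hi : i = 2 ∨ i = 3 := by omega
      exact isRepOver_of h.exists_isRepOver_isQuadMatroid_pair_pair (by aesop) (by aesop)

lemma isRepOver_contract (hM : IsQuadMatroid K ψ {A, B} {A} M) (h : IsHyperplanePair K ψ A B)
    (e : ι ⊕ Fin 4) : (M ／ {e}).IsRepOver K := by
  have isRepOver_of {𝓟 𝓠 : Set (Set ι)}
      (hM' : ∃ M' : Matroid (ι ⊕ Fin 4), M'.IsRepOver K ∧ IsQuadMatroid K ψ 𝓟 𝓠 M')
      (h𝓟 : ∀ X, e ∈ X ⊎ {0, 1} → (X = A ∨ X = B ↔ X ∈ 𝓟))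
      (h𝓠 : ∀ X, e ∈ X ⊎ {2, 3} → (X = A ↔ X ∈ 𝓠)) : (M ／ {e}).IsRepOver K := by
    obtain ⟨M', hM'rep, hM'⟩ := hM'
    exact hM.contract_eq hM' (hM.indep_singleton h e) h𝓟 h𝓠 ▸ hM'rep.contract {e}
  have notMem {j : ι} (hj : j ∈ B) : j ∉ A := h.isCompl.symm.disjoint.notMem_of_mem_left hj
  rcases e with j | i
  · by_cases hj : j ∈ A
    · exact isRepOver_of h.exists_isRepOver_isQuadMatroid_pair_pair (by aesop) (by aesop)
    · replace hj : j ∈ B := h.isCompl.compl_eq ▸ hj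
      exact isRepOver_of h.symm.exists_isRepOver_isQuadMatroid_left_empty (by aesop) (by aesop)
  · by_cases hi : i = 0 ∨ i = 1
    · exact isRepOver_of h.exists_isRepOver_isQuadMatroid_pair_pair (by aesop) (by aesop)
    · replace hi : i = 2 ∨ i = 3 := by omega
      exact isRepOver_of h.exists_isRepOver_isQuadMatroid_empty_left (by aesop) (by aesop)

end Minors

end IsQuadMatroid

end QuadMatroidOfHyperplanePair

section Nonrepresentable

variable {ι : Type u} {K : Type v} {V : Type*} [Field K] [AddCommGroup V] [Module K V] {ψ : ι → V}
  {A B : Set ι} {𝓟 𝓠 : Set (Set ι)} {M : Matroid (ι ⊕ Fin 4)}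

lemma IsHyperplanePair.isQuadBase_diff_singleton_union [Finite ι] (h : IsHyperplanePair K ψ A B)
    {a : ι} (ha : a ∈ A) : IsQuadBase K ψ 𝓟 𝓠 ((A \ {a}) ⊎ {0, 1, 2}) := by
  refine isQuadBase_sum_iff.2 ⟨?_, h.linearIndepOn_left.mono sdiff_subset, ?_, ?_, ?_⟩
  · rw [← h.ncard_left, ← ncard_sdiff_singleton_add_one ha A.toFinite,
      ncard_eq_three.2 ⟨0, 1, 2, by decide, by decide, by decide, rfl⟩]
  · exact (ne_univ_iff_exists_notMem _).2 ⟨3, by decide⟩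
  · exact fun hY ↦ absurd (hY.le (by simp : (2 : Fin 4) ∈ _)) (by decide)
  · exact fun hY ↦ absurd (hY.le (by simp : (0 : Fin 4) ∈ _)) (by decide)

lemma isQuadBase_union_zero [Finite ι] {X : Set ι} (hX : LinearIndepOn K ψ X)
    (hcard : X.ncard = finrank K V) : IsQuadBase K ψ 𝓟 𝓠 (X ⊎ {0}) := by
  refine isQuadBase_sum_iff.2 ⟨by rw [ncard_singleton, hcard], hX, ?_, ?_, ?_⟩
  · exact (ne_univ_iff_exists_notMem _).2 ⟨3, by decide⟩
  · exact fun hY ↦ absurd (hY.ge (by simp : (1 : Fin 4) ∈ _)) (by decide)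
  · exact fun hY ↦ absurd (hY.ge (by simp : (2 : Fin 4) ∈ _)) (by decide)

namespace IsQuadMatroid

variable [Finite ι]

lemma lt_rnk (hM : IsQuadMatroid K ψ 𝓟 𝓠 M) {S X : Set (ι ⊕ Fin 4)}
    (hS : IsQuadBase K ψ 𝓟 𝓠 S) (hSX : S ⊆ X) : finrank K V < M.rnk X := by
  have : M.Finite := ⟨toFinite _⟩
  rw [Nat.lt_iff_add_one_le, ← hS.1]
  exact ncard_le_rnk_of_indep ((hM.isBase_iff S).2 hS).indep hSX

lemma rnk_le_of_not_isQuadBase (hM : IsQuadMatroid K ψ 𝓟 𝓠 M) {S : Set (ι ⊕ Fin 4)}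
    (hcard : S.ncard = finrank K V + 1) (hS : ¬ IsQuadBase K ψ 𝓟 𝓠 S) :
    M.rnk S ≤ finrank K V := by
  have : M.Finite := ⟨toFinite _⟩
  refine Nat.lt_add_one_iff.1 (hcard ▸ rnk_lt_ncard_of_not_indep S.toFinite fun hind ↦ hS ?_)
  obtain ⟨T, hT, hST⟩ := hind.exists_isBase_superset
  have hT' := (hM.isBase_iff T).1 hT
  rwa [eq_of_subset_of_ncard_le hST (by rw [hT'.1, hcard])]

lemma rnk_union_zero_one_le (hM : IsQuadMatroid K ψ 𝓟 𝓠 M) {X : Set ι}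
    (hcard : X.ncard + 1 = finrank K V) (hX : X ∈ 𝓟) : M.rnk (X ⊎ {0, 1}) ≤ finrank K V :=
  hM.rnk_le_of_not_isQuadBase
    (by rw [ncard_image_inl_union_image_inr, ncard_pair (by decide), ← hcard])
    fun hS ↦ (isQuadBase_sum_iff.1 hS).2.2.2.1 rfl hX

lemma rnk_union_two_three_le (hM : IsQuadMatroid K ψ 𝓟 𝓠 M) {X : Set ι}
    (hcard : X.ncard + 1 = finrank K V) (hX : X ∈ 𝓠) : M.rnk (X ⊎ {2, 3}) ≤ finrank K V :=
  hM.rnk_le_of_not_isQuadBase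
    (by rw [ncard_image_inl_union_image_inr, ncard_pair (by decide), ← hcard])
    fun hS ↦ (isQuadBase_sum_iff.1 hS).2.2.2.2 rfl hX

lemma rnk_image_inl_le [FiniteDimensional K V] (hM : IsQuadMatroid K ψ 𝓟 𝓠 M)
    (X : Set ι) : M.rnk (Sum.inl '' X) ≤ finrank K V := by
  have : M.Finite := ⟨toFinite _⟩
  obtain ⟨T, hT⟩ := M.exists_isBase
  refine Nat.lt_add_one_iff.1 <| ((hM.isBase_iff T).1 hT).1 ▸
    rnk_lt_ncard_of_forall_not_isBase hT fun S hSX hS ↦ ?_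
  obtain ⟨Y, -, rfl⟩ := subset_image_iff.1 hSX
  obtain ⟨hcard, hY, -⟩ := (hM.isBase_iff _).1 hS
  rw [ncard_image_of_injective _ Sum.inl_injective] at hcard
  rw [preimage_image_eq _ Sum.inl_injective] at hY
  have := (span K (ψ '' Y)).finrank_le
  rw [finrank_span_image_eq_ncard hY Y.toFinite] at this
  omega

lemma rnk_image_inr_univ_lt (hM : IsQuadMatroid K ψ 𝓟 𝓠 M) : M.rnk (Sum.inr '' univ) < 4 := by
  have : M.Finite := ⟨toFinite _⟩
  have hcard : (Sum.inr '' univ : Set (ι ⊕ Fin 4)).ncard = 4 := by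
    rw [ncard_image_of_injective _ Sum.inr_injective, ncard_univ, Nat.card_fin]
  refine (rnk_lt_ncard_of_not_indep (toFinite _) fun hind ↦ ?_).trans_eq hcard
  obtain ⟨T, hT, hsub⟩ := hind.exists_isBase_superset
  exact ((hM.isBase_iff T).1 hT).2.2.1 <| univ_subset_iff.1 <| image_subset_iff.1 hsub

lemma not_ingletonIneq [FiniteDimensional K V] (hM : IsQuadMatroid K ψ {A, B} {A} M)
    (h : IsHyperplanePair K ψ A B) :
    ¬ M.IngletonIneq (Sum.inl '' B) (Sum.inr '' {2, 3}) (Sum.inl '' A) (Sum.inr '' {0, 1}) := by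
  have : M.Finite := ⟨toFinite _⟩
  have hBA : B ≠ A := h.isCompl.disjoint.symm.ne h.symm.nonempty_left.ne_empty
  have ncard_pair₀₁ : ({0, 1} : Set (Fin 4)).ncard = 2 := ncard_pair (by decide)
  have ncard_pair₂₃ : ({2, 3} : Set (Fin 4)).ncard = 2 := ncard_pair (by decide)
  obtain ⟨a, ha⟩ := h.nonempty_left
  obtain ⟨b, hb⟩ := h.symm.nonempty_left
  have hA := ncard_le_rnk_of_indep
    (((hM.isBase_iff _).2 h.isQuadBase_union_zero_two).indep.subset subset_union_left) subset_rfl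
  have hP := ncard_le_rnk_of_indep (X := Sum.inr '' {0, 1}) (I := Sum.inr '' {0, 1})
    (((hM.isBase_iff _).2 (h.isQuadBase_diff_singleton_union ha)).indep.subset
      (by grind)) subset_rfl
  rw [ncard_image_of_injective _ Sum.inl_injective] at hA
  rw [ncard_image_of_injective _ Sum.inr_injective, ncard_pair₀₁] at hP
  have hBQ := hM.lt_rnk (h.symm.isQuadBase ncard_pair₂₃ (by simp [pair_eq_pair_iff])
    (by simp [hBA])) subset_rfl
  have hBAP := hM.lt_rnk (X := Sum.inl '' B ∪ Sum.inl '' A ∪ Sum.inr '' {0, 1})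
    (isQuadBase_union_zero (h.linearIndepOn_insert_left hb) (h.ncard_insert_left hb)) (by grind)
  have hQAP := hM.lt_rnk (X := Sum.inr '' {2, 3} ∪ Sum.inl '' A ∪ Sum.inr '' {0, 1})
    h.isQuadBase_union_zero_two (by grind)
  have hBA_le := hM.rnk_image_inl_le (B ∪ A)
  have hBP := hM.rnk_union_zero_one_le h.ncard_right (by simp)
  have hAQ := hM.rnk_union_two_three_le h.ncard_left rfl
  have hAP := hM.rnk_union_zero_one_le h.ncard_left (by simp)
  have hPQ_univ : ({0, 1} ∪ {2, 3} : Set (Fin 4)) = univ := by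
    ext i
    fin_cases i <;> simp
  have hPQ := hM.rnk_image_inr_univ_lt
  rw [← hPQ_univ, Set.image_union, union_comm] at hPQ
  rw [Set.image_union] at hBA_le
  rw [union_comm] at hAQ
  have := h.ncard_left
  unfold IngletonIneq
  omega

end IsQuadMatroid

end Nonrepresentable

section ExcludedMinor

variable {ι : Type u} {K : Type v} {V : Type*} [Field K] [AddCommGroup V] [Module K V]
  [FiniteDimensional K V] [Finite ι] {ψ : ι → V} {A B : Set ι} {𝓟 𝓠 : Set (Set ι)}
  {M : Matroid (ι ⊕ Fin 4)}

lemma IsQuadMatroid.indep_image_inl_iff (hM : IsQuadMatroid K ψ 𝓟 𝓠 M)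
    (h : IsHyperplanePair K ψ A B) {X : Set ι} :
    M.Indep (Sum.inl '' X) ↔ LinearIndepOn K ψ X := by
  refine ⟨fun hX ↦ ?_, fun hX ↦ ?_⟩
  · obtain ⟨T, hT, hXT⟩ := hX.exists_isBase_superset
    exact ((hM.isBase_iff T).1 hT).2.1.mono (image_subset_iff.1 hXT)
  · obtain ⟨b, hb⟩ := h.symm.nonempty_left
    obtain ⟨T, hT, hXT⟩ := (linearMatroid_indep_iff.2 hX).exists_isBase_superset
    obtain ⟨hTψ, hTcard⟩ := (linearMatroid_isBase_iff (h.linearIndepOn_insert_left hb)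
      (h.ncard_insert_left hb)).1 hT
    exact ((hM.isBase_iff _).2 (isQuadBase_union_zero hTψ hTcard)).indep.subset
      ((image_mono hXT).trans subset_union_left)

lemma IsHyperplanePair.exists_excludedMinor [Infinite K] (h : IsHyperplanePair K ψ A B) :
    ∃ M : Matroid (ι ⊕ Fin 4), M.E = univ ∧ ¬ M.IsRepOver K ∧
      (∀ P : Matroid (ι ⊕ Fin 4), P.IsProperMinorOf M → P.IsRepOver K) ∧
      ∀ X, M.Indep (Sum.inl '' X) ↔ LinearIndepOn K ψ X := by
  obtain ⟨M₀, -, hM₀⟩ := h.exists_isRepOver_isQuadMatroid_pair_pair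
  obtain ⟨M, hM⟩ := h.exists_isQuadMatroid_relaxation hM₀
  have : M.Finite := ⟨toFinite _⟩
  refine ⟨M, hM.ground_eq, fun hrep ↦ hM.not_ingletonIneq h (hrep.ingletonIneq _ _ _ _),
    fun P hP ↦ ?_, fun X ↦ hM.indep_image_inl_iff h⟩
  exact hP.isRepOver (fun e _ ↦ hM.isRepOver_delete h e) (fun e _ ↦ hM.isRepOver_contract h e)

end ExcludedMinor

section Embedding

variable {κ K U : Type*} [Field K] [AddCommGroup U] [Module K U] (b₁ b₂ : Basis κ K U)

/-- The vectors of two bases of `U`, together with two copies of the origin of `U`, placed on two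
disjoint translates of `U` in `U × K × K`. -/
noncomputable def basisPair : Option κ ⊕ Option κ → U × K × K :=
  Sum.elim (fun i ↦ (i.elim 0 b₁, 1, 0)) (fun i ↦ (i.elim 0 b₂, 0, 1))

lemma isHyperplanePair_basisPair [Finite κ] [Nonempty κ] :
    IsHyperplanePair K (basisPair b₁ b₂) (range Sum.inl) (range Sum.inr) := by
  have := b₁.finiteDimensional_of_finite
  have hcard : Nat.card (Option κ) + 1 = finrank K (U × K × K) := by
    simp [finrank_eq_nat_card_basis b₁, Finite.card_option]
  have hpos : 0 < Nat.card κ := Nat.card_pos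
  have ncard_inl :
      (range (Sum.inl : Option κ → Option κ ⊕ Option κ)).ncard = Nat.card (Option κ) := by
    rw [← image_univ, ncard_image_of_injective _ Sum.inl_injective, ncard_univ]
  have ncard_inr :
      (range (Sum.inr : Option κ → Option κ ⊕ Option κ)).ncard = Nat.card (Option κ) := by
    rw [← image_univ, ncard_image_of_injective _ Sum.inr_injective, ncard_univ]
  constructor
  · exact isCompl_range_inl_range_inr
  · exact (linearIndepOn_range_iff Sum.inl_injective _).2
      (linearIndependent_option_elim_prodMk b₁ (by simp))
  · exact (linearIndepOn_range_iff Sum.inr_injective _).2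
      (linearIndependent_option_elim_prodMk b₂ (by simp))
  · rw [ncard_inl, hcard]
  · rw [ncard_inr, hcard]
  · rw [ncard_inl, Finite.card_option]
    omega
  · rintro _ ⟨i, rfl⟩
    exact notMem_span_image_of_forall_eq_zero (LinearMap.snd K K K ∘ₗ LinearMap.snd K U (K × K))
      (by simp [basisPair]) (by simp [basisPair])
  · rintro _ ⟨i, rfl⟩
    exact notMem_span_image_of_forall_eq_zero (LinearMap.fst K K K ∘ₗ LinearMap.snd K U (K × K))
      (by simp [basisPair]) (by simp [basisPair])

end Embedding

section Graph

variable {E ι K W : Type*} [Field K] [AddCommGroup W] [Module K W] [Finite E] (φ : E → W)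
  (w : Basis ι K W)

/-- The basis of `(E → K) × W` formed by the vectors `(e, φ e)` on the graph of `φ` and the vectors
`(0, w i)`. -/
noncomputable def graphBasis : Basis (E ⊕ ι) K ((E → K) × W) :=
  ((Pi.basisFun K E).prod w).map <| (LinearEquiv.refl K _).skewProd (LinearEquiv.refl K _)
    ((Pi.basisFun K E).constr K φ)

lemma graphBasis_inl (e : E) : graphBasis φ w (Sum.inl e) = (Pi.basisFun K E e, φ e) := by
  simp [graphBasis]

/-- The hyperplane pair whose first basis comes from the graph of `φ` and whose second basis comes
from the standard basis of `(E → K) × W`. -/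
noncomputable def graphPair : Option (E ⊕ ι) ⊕ Option (E ⊕ ι) → ((E → K) × W) × K × K :=
  basisPair (graphBasis φ w) ((Pi.basisFun K E).prod w)

/-- The indices of the vectors of `graphPair φ w` that lie in `(E → K) × 0 × K × K`. Contracting
them projects the remaining vectors to `W`. -/
def graphKerIndices (E ι : Type*) : Set (Option (E ⊕ ι) ⊕ Option (E ⊕ ι)) :=
  insert (Sum.inl none) (Sum.inr '' range (Option.map Sum.inl))

lemma isHyperplanePair_graphPair [Finite ι] [Nonempty ι] :
    IsHyperplanePair K (graphPair φ w) (range Sum.inl) (range Sum.inr) :=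
  isHyperplanePair_basisPair _ _

lemma linearIndepOn_graphKerIndices [Finite ι] [Nonempty ι] :
    LinearIndepOn K (graphPair φ w) (graphKerIndices E ι) :=
  ((isHyperplanePair_graphPair φ w).symm.linearIndepOn_insert_left (mem_range_self none)).mono
    (insert_subset_insert (image_subset_range _ _))

lemma ncard_graphKerIndices : (graphKerIndices E ι).ncard = Nat.card E + 2 := by
  rw [graphKerIndices, ncard_insert_of_notMem (by simp) (toFinite _),
    ncard_image_of_injective _ Sum.inr_injective, ← image_univ,
    ncard_image_of_injective _ (Option.map_injective Sum.inl_injective), ncard_univ,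
    Finite.card_option]

lemma span_image_graphKerIndices [Finite ι] [Nonempty ι] :
    span K (graphPair φ w '' graphKerIndices E ι) =
      LinearMap.ker (LinearMap.snd K (E → K) W ∘ₗ LinearMap.fst K _ (K × K)) := by
  have := w.finiteDimensional_of_finite
  have := Fintype.ofFinite E
  refine Submodule.eq_of_le_of_finrank_eq (Submodule.span_le.2 ?_) ?_
  · rintro _ ⟨_, rfl | ⟨_, ⟨_ | e, rfl⟩, rfl⟩, rfl⟩ <;> simp [graphPair, basisPair]
  · have hker :=
      (LinearMap.snd K (E → K) W ∘ₗ LinearMap.fst K _ (K × K)).finrank_range_add_finrank_ker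
    rw [LinearMap.range_eq_top.2 (Prod.snd_surjective.comp Prod.fst_surjective),
      finrank_top] at hker
    rw [finrank_span_image_eq_ncard (linearIndepOn_graphKerIndices φ w) (toFinite _),
      ncard_graphKerIndices, Nat.card_eq_fintype_card]
    simp only [finrank_prod, finrank_self, finrank_fintype_fun_eq_card] at hker
    omega

lemma linearIndepOn_graphPair_iff [Finite ι] [Nonempty ι] {I : Set E} :
    LinearIndepOn K (graphPair φ w)
      ((fun e ↦ Sum.inl (some (Sum.inl e))) '' I ∪ graphKerIndices E ι) ↔ LinearIndepOn K φ I := by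
  have hdisj : Disjoint (graphKerIndices E ι) ((fun e ↦ Sum.inl (some (Sum.inl e))) '' I) :=
    disjoint_left.2 (by rintro _ (rfl | ⟨_, ⟨_ | e, rfl⟩, rfl⟩) <;> simp)
  have hφ : ⇑(LinearMap.snd K (E → K) W ∘ₗ LinearMap.fst K _ (K × K)) ∘ graphPair φ w ∘
      (fun e ↦ Sum.inl (some (Sum.inl e))) = φ := by
    ext e
    simp [graphPair, basisPair, graphBasis_inl]
  rw [Set.union_comm, linearIndepOn_union_iff_of_span_eq_ker hdisj (span_image_graphKerIndices φ w),
    and_iff_right (linearIndepOn_graphKerIndices φ w),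
    linearIndepOn_image_iff_of_injOn (fun _ _ _ _ h ↦ by simpa using h), Function.comp_assoc, hφ]

end Graph

section Minor

variable {α : Type u} {β : Type*} {N : Matroid α} {M : Matroid β} {f : N.E → β} {C : Set β}

lemma exists_isMinorOf_isIsoTo [Nonempty β] (hf : f.Injective) (hC : M.Indep C)
    (hfE : range f ⊆ M.E) (hfC : Disjoint (range f) C)
    (h : ∀ I : Set N.E, N.Indep (Subtype.val '' I) ↔ M.Indep (f '' I ∪ C)) :
    ∃ N' : Matroid β, N'.IsMinorOf M ∧ N.IsIsoTo N' := by
  obtain ⟨g, rfl⟩ := Subtype.val_injective.surjective_comp_right f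
  have hrange : range (g ∘ ((↑) : N.E → α)) = g '' N.E := by rw [range_comp, Subtype.range_coe]
  rw [hrange] at hfE hfC
  have hground : (M ／ C ＼ (M.E \ (g '' N.E ∪ C))).E = g '' N.E := by
    rw [delete_ground, contract_ground, sdiff_sdiff_comm, sdiff_sdiff_cancel_left
      (union_subset hfE hC.subset_ground), union_sdiff_right, hfC.sdiff_eq_left]
  refine ⟨_, ⟨C, M.E \ (g '' N.E ∪ C), hC.subset_ground, sdiff_subset,
    disjoint_sdiff_right.mono_left subset_union_right, rfl⟩, g, ?_, fun I hI ↦ ?_⟩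
  · change BijOn g N.E (M ／ C ＼ (M.E \ (g '' N.E ∪ C))).E
    rw [hground]
    exact (injOn_iff_injective.2 hf).bijOn_image
  · change _ ↔ (M ／ C ＼ (M.E \ (g '' N.E ∪ C))).Indep (g '' I)
    lift I to Set N.E using hI
    have hI : g '' (Subtype.val '' I) ⊆ g '' N.E := image_mono (Subtype.coe_image_subset _ _)
    rw [h, image_comp, delete_indep_iff, hC.contract_indep_iff, and_iff_right (hfC.mono_left hI),
      and_iff_left (disjoint_sdiff_right.mono_left (hI.trans subset_union_left))]

end Minor

section Main

variable {α : Type u}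

lemma IsRepOver.exists_fin_succ {K : Type v} [Field K] {N : Matroid α} [N.Finite]
    (hN : N.IsRepOver K) :
    ∃ (n : ℕ) (φ : N.E → Fin (n + 1) → K),
      ∀ I : Set N.E, N.Indep (Subtype.val '' I) ↔ LinearIndepOn K φ I := by
  obtain ⟨W, _, _, φ, hφ⟩ := hN
  have := FiniteDimensional.span_of_finite K (N.ground_finite.image φ)
  let ψ (e : N.E) : span K (φ '' N.E) := ⟨φ e, Submodule.subset_span (mem_image_of_mem φ e.2)⟩
  let j : span K (φ '' N.E) →ₗ[K] Fin (finrank K (span K (φ '' N.E)) + 1) → K :=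
    (Fin.consLinearEquiv K fun _ ↦ K).toLinearMap ∘ₗ LinearMap.inr K K _ ∘ₗ
      (finBasis K (span K (φ '' N.E))).equivFun.toLinearMap
  have hj : Function.Injective j :=
    (Fin.consLinearEquiv K fun _ ↦ K).injective.comp <|
      LinearMap.inr_injective.comp (finBasis K (span K (φ '' N.E))).equivFun.injective
  refine ⟨_, j ∘ ψ, fun I ↦ ?_⟩
  rw [hφ, and_iff_right (Subtype.coe_image_subset _ _),
    LinearMap.linearIndepOn_iff_of_injOn j hj.injOn,
    ← LinearMap.linearIndepOn_iff_of_injOn (Submodule.subtype _)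
      (Submodule.subtype_injective _).injOn]
  exact linearIndepOn_image_iff_of_injOn Subtype.val_injective.injOn

theorem exists_excludedMinor_rep_general (𝕂 : Type v) [Field 𝕂] [Infinite 𝕂] (N : Matroid α)
    [N.Finite] (hN : N.IsRepOver 𝕂) :
    ∃ (β : Type u) (M : Matroid β), M.Finite ∧ ¬ M.IsRepOver 𝕂 ∧
      (∀ P : Matroid β, P.IsProperMinorOf M → P.IsRepOver 𝕂) ∧
      ∃ N' : Matroid β, N'.IsMinorOf M ∧ N.IsIsoTo N' := by
  have := N.ground_finite.to_subtype
  obtain ⟨n, φ, hφ⟩ := hN.exists_fin_succ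
  let w := Pi.basisFun 𝕂 (Fin (n + 1))
  obtain ⟨M, hE, hM, hminor, hindep⟩ := (isHyperplanePair_graphPair φ w).exists_excludedMinor
  refine ⟨_, M, ⟨toFinite _⟩, hM, hminor, exists_isMinorOf_isIsoTo
    (f := fun e ↦ Sum.inl (Sum.inl (some (Sum.inl e)))) (C := Sum.inl '' graphKerIndices N.E _)
    (fun _ _ h ↦ by simpa using h) ((hindep _).2 (linearIndepOn_graphKerIndices φ w))
    (hE ▸ subset_univ _) ?_ fun I ↦ ?_⟩
  · rw [Set.disjoint_left]
    rintro _ ⟨e, rfl⟩ ⟨_, rfl | ⟨_, -, rfl⟩, h⟩ <;> simp at h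
  · rw [hφ, ← linearIndepOn_graphPair_iff φ w, ← hindep, Set.image_union, Set.image_image]

end Main

end Matroid

/-- For an infinite field `𝕂`, every finite `𝕂`-representable matroid is (up to
isomorphism) a minor of an excluded minor for `𝕂`-representability. -/
theorem Matroid.exists_excludedMinor_rep {α : Type} (𝕂 : Type) [Field 𝕂] [Infinite 𝕂]
    (N : Matroid α) [N.Finite] (hN : N.IsRepOver 𝕂) :
    ∃ (β : Type) (M : Matroid β), M.Finite ∧ ¬ M.IsRepOver 𝕂 ∧
      (∀ P : Matroid β, P.IsProperMinorOf M → P.IsRepOver 𝕂) ∧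
      ∃ N' : Matroid β, N'.IsMinorOf M ∧ N.IsIsoTo N' :=
  Matroid.exists_excludedMinor_rep_general 𝕂 N hN
end
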